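/- Let 0 < ρ₀ < 1, λ₀ > 0, and set B₁ = 43, B₂ = 4.6. If t₀ ≥ 2 and t₀^{ρ₀} > (B₁/ρ₀ + B₂ ln t₀)/λ₀, then for every λ ≥ λ₀ and every ρ ∈ [ρ₀, 1), the derivative with respect to ρ of the function ρ ↦ E_ρ(−λ t₀^ρ) is negative; consequently this function is strictly monotonically decreasing on [ρ₀, 1). -/

import Mathlib

open Set Real

/-- The Mittag-Leffler function `E_ρ(z) = ∑_{k=0}^∞ z^k / Γ(ρk + 1)`. -/
noncomputable def mittagLeffler (ρ z : ℝ) : ℝ := ∑' k : ℕ, z ^ k / Real.Gamma (ρ * k + 1)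
open Set Real

namespace ML
open MeasureTheory Filter Topology

lemma integrable_gexp {y c : ℝ} (hy : 0 < y) (hc : 0 < c) :
    Integrable (fun u : ℝ => Real.exp (y * u) * Real.exp (-(c * Real.exp u))) ∧
    ∫ u : ℝ, Real.exp (y * u) * Real.exp (-(c * Real.exp u)) = (1 / c) ^ y * Real.Gamma y := by
  have himg : Real.exp '' univ = Ioi 0 := by rw [image_univ, Real.range_exp]
  have hd : ∀ x ∈ (univ : Set ℝ), HasDerivWithinAt Real.exp (Real.exp x) univ x :=
    fun x _ => (Real.hasDerivAt_exp x).hasDerivWithinAt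
  have hinj : InjOn Real.exp univ := Real.exp_injective.injOn
  have hI : IntegrableOn (fun t : ℝ => t ^ (y - 1) * Real.exp (-(c * t))) (Ioi 0) := by
    by_contra h
    have h1 := integral_undef h
    rw [Real.integral_rpow_mul_exp_neg_mul_Ioi hy hc] at h1
    have : 0 < (1 / c) ^ y * Real.Gamma y := by
      have := Real.Gamma_pos_of_pos hy
      positivity
    linarith
  have key : ∀ u : ℝ, |Real.exp u| • ((Real.exp u) ^ (y - 1) * Real.exp (-(c * Real.exp u)))
      = Real.exp (y * u) * Real.exp (-(c * Real.exp u)) := by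
    intro u
    rw [abs_of_pos (Real.exp_pos u), smul_eq_mul, ← mul_assoc, ← Real.exp_mul, ← Real.exp_add]
    congr 2
    ring
  constructor
  · have := (integrableOn_image_iff_integrableOn_abs_deriv_smul MeasurableSet.univ hd hinj
      (fun t : ℝ => t ^ (y - 1) * Real.exp (-(c * t)))).1 (by rw [himg]; exact hI)
    simp only [key, integrableOn_univ] at this
    exact this
  · have := integral_image_eq_integral_abs_deriv_smul MeasurableSet.univ hd hinj
      (fun t : ℝ => t ^ (y - 1) * Real.exp (-(c * t)))
    rw [himg, Real.integral_rpow_mul_exp_neg_mul_Ioi hy hc] at this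
    simp only [key, Measure.restrict_univ] at this
    exact this.symm

lemma integrableOn_gexp (y a : ℝ) {c : ℝ} (hc : 0 < c) :
    IntegrableOn (fun u : ℝ => Real.exp (y * u) * Real.exp (-(c * Real.exp u))) (Ioi a) := by
  have h := ((integrable_gexp (y := |y| + 1) (by positivity) hc).1.integrableOn
    (s := Ioi a)).const_mul (Real.exp (-((|y| + 1 - y) * a)))
  refine Integrable.mono' h (by fun_prop) ?_
  refine (ae_restrict_mem measurableSet_Ioi).mono fun u hu => ?_
  rw [Real.norm_of_nonneg (by positivity), ← mul_assoc]
  refine mul_le_mul_of_nonneg_right ?_ (by positivity)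
  rw [← Real.exp_add, Real.exp_le_exp]
  have : 0 ≤ (|y| + 1 - y) * (u - a) :=
    mul_nonneg (by linarith [le_abs_self y]) (by linarith [mem_Ioi.1 hu])
  nlinarith

/-- The integrand on the contour. -/
noncomputable def hk (k : ℂ → ℂ) (ζ : ℂ) : ℂ := Complex.exp (Complex.exp ζ) * k ζ

noncomputable def Hr (k : ℂ → ℂ) (φ a : ℝ) : ℝ :=
  (∫ u in Ioi a, hk k (u + φ * Complex.I)).im + (∫ v in (0:ℝ)..φ, hk k (a + v * Complex.I)).re

structure Adm (k : ℂ → ℂ) (y : ℝ) : Prop where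
  diff : ∀ ζ : ℂ, 0 ≤ ζ.im → ζ.im ≤ π → DifferentiableAt ℂ k ζ
  real : ∀ u : ℝ, (k u).im = 0
  bd : ∃ C : ℝ, 0 ≤ C ∧ ∀ ζ : ℂ, 0 ≤ ζ.im → ζ.im ≤ π → ‖k ζ‖ ≤ C * Real.exp (y * ζ.re)

lemma cos_le {v : ℝ} (h1 : 2 * π / 3 ≤ v) (h2 : v ≤ π) : Real.cos v ≤ -(1/2) := by
  have h3 : Real.cos (2 * π / 3) = -(1/2) := by
    rw [show 2 * π / 3 = π - π / 3 by ring, Real.cos_pi_sub, Real.cos_pi_div_three]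
  rw [← h3]
  exact Real.cos_le_cos_of_nonneg_of_le_pi (by positivity) h2 h1

lemma norm_exp_exp (u v : ℝ) : ‖Complex.exp (Complex.exp (u + v * Complex.I))‖
    = Real.exp (Real.exp u * Real.cos v) := by
  rw [Complex.norm_exp, Complex.exp_re]
  simp

lemma norm_exp_exp_le {u v : ℝ} (h1 : 2 * π / 3 ≤ v) (h2 : v ≤ π) :
    ‖Complex.exp (Complex.exp (u + v * Complex.I))‖ ≤ Real.exp (-((1/2) * Real.exp u)) := by
  rw [norm_exp_exp]
  have := cos_le h1 h2
  gcongr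
  nlinarith [Real.exp_pos u]

lemma Adm.diff_hk {k : ℂ → ℂ} {y : ℝ} (h : Adm k y) {ζ : ℂ} (h1 : 0 ≤ ζ.im) (h2 : ζ.im ≤ π) :
    DifferentiableAt ℂ (hk k) ζ := by
  have := h.diff ζ h1 h2
  unfold hk
  fun_prop

lemma Adm.cont_line {k : ℂ → ℂ} {y : ℝ} (h : Adm k y) {φ : ℝ} (h1 : 0 ≤ φ) (h2 : φ ≤ π) :
    Continuous (fun u : ℝ => hk k (u + φ * Complex.I)) := by
  rw [continuous_iff_continuousAt]
  intro u
  have hc : ContinuousAt (hk k) (u + φ * Complex.I) :=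
    (h.diff_hk (by simpa using h1) (by simpa using h2)).continuousAt
  exact ContinuousAt.comp (f := fun u : ℝ => (u + φ * Complex.I : ℂ)) hc (by fun_prop)

lemma Adm.cont_vert {k : ℂ → ℂ} {y : ℝ} (h : Adm k y) (a : ℝ) :
    ContinuousOn (fun v : ℝ => hk k (a + v * Complex.I)) (Icc 0 π) := by
  intro v hv
  have hc : ContinuousAt (hk k) (a + v * Complex.I) :=
    (h.diff_hk (by simpa using hv.1) (by simpa using hv.2)).continuousAt
  exact (ContinuousAt.comp (f := fun v : ℝ => (a + v * Complex.I : ℂ)) hc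
    (by fun_prop)).continuousWithinAt

lemma Adm.intervalIntegrable {k : ℂ → ℂ} {y : ℝ} (h : Adm k y) (a : ℝ) {v w : ℝ}
    (h1 : 0 ≤ v) (h2 : v ≤ w) (h3 : w ≤ π) :
    IntervalIntegrable (fun v : ℝ => hk k (a + v * Complex.I)) volume v w := by
  refine ((h.cont_vert a).mono ?_).intervalIntegrable
  rw [uIcc_of_le h2]
  exact Icc_subset_Icc h1 h3

lemma Adm.bd_line {k : ℂ → ℂ} {y : ℝ} (h : Adm k y) :
    ∃ C : ℝ, 0 ≤ C ∧ ∀ u φ : ℝ, 2 * π / 3 ≤ φ → φ ≤ π → ‖hk k (u + φ * Complex.I)‖ ≤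
      C * (Real.exp (y * u) * Real.exp (-((1/2) * Real.exp u))) := by
  obtain ⟨C, hC, hb⟩ := h.bd
  refine ⟨C, hC, fun u φ h1 h2 => ?_⟩
  have h0 : 0 ≤ φ := le_trans (by positivity) h1
  have := hb (u + φ * Complex.I) (by simpa using h0) (by simpa using h2)
  unfold hk
  rw [norm_mul]
  calc _ ≤ Real.exp (-((1/2) * Real.exp u)) * (C * Real.exp (y * (u + φ * Complex.I : ℂ).re)) :=
        mul_le_mul (norm_exp_exp_le h1 h2) this (norm_nonneg _) (by positivity)
    _ = _ := by simp; ring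

lemma Adm.integrableOn {k : ℂ → ℂ} {y : ℝ} (h : Adm k y) {φ : ℝ} (h1 : 2 * π / 3 ≤ φ)
    (h2 : φ ≤ π) (a : ℝ) : IntegrableOn (fun u : ℝ => hk k (u + φ * Complex.I)) (Ioi a) := by
  obtain ⟨C, hC, hb⟩ := h.bd_line
  refine Integrable.mono' ((integrableOn_gexp y a (c := 1/2) (by norm_num)).const_mul C) ?_ ?_
  · exact (h.cont_line (le_trans (by positivity) h1) h2).aestronglyMeasurable
  · exact Eventually.of_forall fun u => hb u φ h1 h2

lemma Adm.integrable {k : ℂ → ℂ} {y : ℝ} (h : Adm k y) (hy : 0 < y) {φ : ℝ} (h1 : 2 * π / 3 ≤ φ)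
    (h2 : φ ≤ π) : Integrable (fun u : ℝ => hk k (u + φ * Complex.I)) := by
  obtain ⟨C, hC, hb⟩ := h.bd_line
  refine Integrable.mono' ((integrable_gexp hy (c := 1/2) (by norm_num)).1.const_mul C) ?_ ?_
  · exact (h.cont_line (le_trans (by positivity) h1) h2).aestronglyMeasurable
  · exact Eventually.of_forall fun u => hb u φ h1 h2

lemma Adm.rect {k : ℂ → ℂ} {y : ℝ} (h : Adm k y) {a b v w : ℝ}
    (h1 : 0 ≤ v) (h2 : v ≤ w) (h3 : w ≤ π) :
    (∫ x : ℝ in a..b, hk k (x + v * Complex.I)) - (∫ x : ℝ in a..b, hk k (x + w * Complex.I)) +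
      Complex.I * (∫ y : ℝ in v..w, hk k (b + y * Complex.I)) -
      Complex.I * (∫ y : ℝ in v..w, hk k (a + y * Complex.I)) = 0 := by
  have := Complex.integral_boundary_rect_eq_zero_of_differentiableOn (hk k)
    ⟨a, v⟩ ⟨b, w⟩ (by
      intro ζ hζ
      have h4 := (Complex.mem_reProdIm.1 hζ).2
      simp only [uIcc_of_le h2] at h4
      exact (h.diff_hk (h1.trans h4.1) (h4.2.trans h3)).differentiableWithinAt)
  simpa using this

lemma Adm.Hr_indep {k : ℂ → ℂ} {y : ℝ} (h : Adm k y) {φ : ℝ} (h1 : 2 * π / 3 ≤ φ)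
    (h2 : φ ≤ π) (a b : ℝ) : Hr k φ a = Hr k φ b := by
  have h0 : 0 ≤ φ := le_trans (by positivity) h1
  have hr := h.rect (a := a) (b := b) le_rfl h0 h2
  have hreal : (∫ x : ℝ in a..b, hk k (x + (0:ℝ) * Complex.I)).im = 0 := by
    have : ∀ x : ℝ, hk k (x + (0:ℝ) * Complex.I) = ((hk k x).re : ℂ) := by
      intro x
      apply Complex.ext
      · simp
      · simp only [Complex.ofReal_zero, zero_mul, add_zero, Complex.ofReal_im]
        unfold hk
        rw [← Complex.ofReal_exp, ← Complex.ofReal_exp, Complex.im_ofReal_mul, h.real, mul_zero]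
    simp only [this]
    rw [intervalIntegral.integral_ofReal, Complex.ofReal_im]
  have hs := intervalIntegral.integral_Ioi_sub_Ioi' (h.integrableOn h1 h2 a) (h.integrableOn h1 h2 b)
  have hi := congrArg Complex.im hr
  simp only [Complex.add_im, Complex.sub_im, hreal, ← hs, Complex.I_mul_im, Complex.zero_im] at hi
  unfold Hr
  linarith

lemma Adm.Hr_shift {k : ℂ → ℂ} {y : ℝ} (h : Adm k y) {φ : ℝ} (h1 : 2 * π / 3 ≤ φ)
    (h2 : φ ≤ π) (a : ℝ) : Hr k π a = Hr k φ a := by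
  have h0 : 0 ≤ φ := le_trans (by positivity) h1
  have h1' : 2 * π / 3 ≤ π := by linarith [Real.pi_pos]
  have hr := fun b => h.rect (a := a) (b := b) h0 h2 le_rfl
  have t1 : Tendsto (fun b : ℝ => ∫ x : ℝ in a..b, hk k (x + φ * Complex.I)) atTop
      (𝓝 (∫ x in Ioi a, hk k (x + φ * Complex.I))) :=
    intervalIntegral_tendsto_integral_Ioi a (h.integrableOn h1 h2 a) tendsto_id
  have t2 : Tendsto (fun b : ℝ => ∫ x : ℝ in a..b, hk k (x + π * Complex.I)) atTop
      (𝓝 (∫ x in Ioi a, hk k (x + π * Complex.I))) :=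
    intervalIntegral_tendsto_integral_Ioi a (h.integrableOn h1' le_rfl a) tendsto_id
  have t3 : Tendsto (fun b : ℝ => ∫ y : ℝ in φ..π, hk k (b + y * Complex.I)) atTop (𝓝 0) := by
    obtain ⟨C, hC, hb⟩ := h.bd_line
    have hlim : Tendsto (fun b : ℝ => C * (Real.exp (y * b) * Real.exp (-((1/2) * Real.exp b)))
        * |π - φ|) atTop (𝓝 0) := by
      have e1 : Tendsto (fun s : ℝ => s ^ y * Real.exp (-(1/2) * s)) atTop (𝓝 0) :=
        tendsto_rpow_mul_exp_neg_mul_atTop_nhds_zero y (1/2) (by norm_num)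
      have e2 := e1.comp Real.tendsto_exp_atTop
      have e3 := (e2.const_mul C).mul_const |π - φ|
      rw [mul_zero, zero_mul] at e3
      refine e3.congr fun b => ?_
      simp only [Function.comp]
      rw [← Real.exp_mul, mul_comm b y]
      ring_nf
    refine squeeze_zero_norm (fun b => ?_) hlim
    refine intervalIntegral.norm_integral_le_of_norm_le_const fun v hv => ?_
    rw [uIoc_of_le h2] at hv
    exact hb b v (h1.trans hv.1.le) hv.2
  have t4 := ((t1.sub t2).add (t3.const_mul Complex.I)).sub_const
    (Complex.I * (∫ y : ℝ in φ..π, hk k (a + y * Complex.I)))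
  simp only [hr] at t4
  have e := tendsto_nhds_unique tendsto_const_nhds t4
  have ei := congrArg Complex.im e
  simp only [Complex.sub_im, Complex.I_mul_im, Complex.zero_im, mul_zero,
    add_zero] at ei
  have hadd := intervalIntegral.integral_add_adjacent_intervals
    (h.intervalIntegrable a le_rfl h0 h2) (h.intervalIntegrable a h0 h2 le_rfl)
  unfold Hr
  rw [← hadd, Complex.add_re]
  linarith

lemma Adm.Hr_eq {k : ℂ → ℂ} {y : ℝ} (h : Adm k y) (hy : 0 < y) {φ : ℝ} (h1 : 2 * π / 3 ≤ φ)
    (h2 : φ ≤ π) (a : ℝ) : Hr k φ a = (∫ u : ℝ, hk k (u + φ * Complex.I)).im := by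
  have h0 : 0 ≤ φ := le_trans (by positivity) h1
  have t1 : Tendsto (fun b : ℝ => ∫ x in Ioi b, hk k (x + φ * Complex.I)) atBot
      (𝓝 (∫ x : ℝ, hk k (x + φ * Complex.I))) :=
    (aecover_Ioi (μ := volume) tendsto_id).integral_tendsto_of_countably_generated
      (h.integrable hy h1 h2)
  have t3 : Tendsto (fun b : ℝ => ∫ y : ℝ in (0:ℝ)..φ, hk k (b + y * Complex.I)) atBot (𝓝 0) := by
    obtain ⟨C, hC, hb⟩ := h.bd
    have hlim : Tendsto (fun b : ℝ => Real.exp (Real.exp b) * (C * Real.exp (y * b)) * |φ - 0|)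
        atBot (𝓝 0) := by
      have e1 : Tendsto (fun b : ℝ => Real.exp (Real.exp b)) atBot (𝓝 (Real.exp 0)) :=
        (Real.continuous_exp.tendsto 0).comp Real.tendsto_exp_atBot
      have e2 : Tendsto (fun b : ℝ => Real.exp (y * b)) atBot (𝓝 0) :=
        Real.tendsto_exp_atBot.comp (tendsto_id.const_mul_atBot hy)
      have := (e1.mul (e2.const_mul C)).mul_const |φ - 0|
      simpa using this
    refine squeeze_zero_norm (fun b => ?_) hlim
    refine intervalIntegral.norm_integral_le_of_norm_le_const fun v hv => ?_
    rw [uIoc_of_le h0] at hv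
    unfold hk
    rw [norm_mul]
    have hh := hb (b + v * Complex.I) (by simpa using hv.1.le) (by simpa using hv.2.trans h2)
    simp only [Complex.add_re, Complex.ofReal_re, Complex.mul_re, Complex.I_re, mul_zero,
      Complex.ofReal_im, Complex.I_im, sub_zero, zero_mul, add_zero] at hh
    refine mul_le_mul ?_ hh (norm_nonneg _) (by positivity)
    rw [norm_exp_exp]
    gcongr
    nlinarith [Real.exp_pos b, Real.cos_le_one v]
  have t4 : Tendsto (fun b : ℝ => Hr k φ b) atBot
      (𝓝 ((∫ x : ℝ, hk k (x + φ * Complex.I)).im + (0:ℂ).re)) :=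
    ((Complex.continuous_im.tendsto _).comp t1).add ((Complex.continuous_re.tendsto _).comp t3)
  simp only [fun b => h.Hr_indep h1 h2 b a, Complex.zero_re, add_zero] at t4
  exact tendsto_nhds_unique tendsto_const_nhds t4

end ML

open Set Real

namespace ML
open MeasureTheory Filter Topology

lemma norm_kexp (z : ℝ) (ζ : ℂ) : ‖Complex.exp (-z * ζ)‖ = Real.exp (-z * ζ.re) := by
  rw [Complex.norm_exp]
  simp

lemma adm_exp (z : ℝ) : Adm (fun ζ : ℂ => Complex.exp (-z * ζ)) (-z) where
  diff := fun ζ _ _ => by fun_prop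
  real := fun u => by
    rw [← Complex.ofReal_neg, ← Complex.ofReal_mul, ← Complex.ofReal_exp, Complex.ofReal_im]
  bd := ⟨1, zero_le_one, fun ζ _ _ => by rw [norm_kexp, one_mul]⟩

lemma two_pi_div_three_le : 2 * π / 3 ≤ π := by linarith [Real.pi_pos]

lemma exp_exp_pi (u : ℝ) : Complex.exp (Complex.exp (u + π * Complex.I))
    = ((Real.exp (-Real.exp u) : ℝ) : ℂ) := by
  rw [Complex.exp_add, Complex.exp_pi_mul_I]
  push_cast
  ring_nf

lemma hankel_neg {z : ℝ} (hz : z < 0) (a : ℝ) :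
    Hr (fun ζ : ℂ => Complex.exp (-z * ζ)) π a = π / Real.Gamma (1 + z) := by
  rw [(adm_exp z).Hr_eq (by linarith) two_pi_div_three_le le_rfl]
  have key : ∀ u : ℝ, hk (fun ζ : ℂ => Complex.exp (-z * ζ)) (u + π * Complex.I) =
      ((Real.exp (-z * u) * Real.exp (-(1 * Real.exp u)) : ℝ) : ℂ) *
        Complex.exp (((-z * π : ℝ) : ℂ) * Complex.I) := by
    intro u
    unfold hk
    beta_reduce
    rw [exp_exp_pi, show (-z * (u + π * Complex.I) : ℂ) = ((-z * u : ℝ) : ℂ)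
      + ((-z * π : ℝ) : ℂ) * Complex.I by push_cast; ring, Complex.exp_add]
    push_cast
    ring_nf
  simp only [key]
  rw [integral_mul_const, integral_complex_ofReal, Complex.im_ofReal_mul,
    Complex.exp_ofReal_mul_I_im, (integrable_gexp (y := -z) (c := 1) (by linarith) one_pos).2]
  have hrefl := Real.Gamma_mul_Gamma_one_sub (-z)
  have hs : 0 < Real.Gamma (-z) := Real.Gamma_pos_of_pos (by linarith)
  rw [show 1 - -z = 1 + z by ring, mul_comm π] at hrefl
  simp only [div_one, Real.one_rpow, one_mul]
  by_cases h0 : Real.sin (-z * π) = 0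
  · rw [h0, div_zero] at hrefl
    have : Real.Gamma (1 + z) = 0 := by
      rcases mul_eq_zero.1 hrefl with h | h
      · exact absurd h hs.ne'
      · exact h
    rw [h0, this]; simp
  · have h1 : Real.Gamma (1 + z) ≠ 0 := by
      intro h
      rw [h, mul_zero] at hrefl
      have := div_ne_zero Real.pi_ne_zero h0
      exact this hrefl.symm
    rw [eq_div_iff h0] at hrefl
    rw [eq_div_iff h1]
    linarith

lemma hankel_zero (a : ℝ) :
    Hr (fun ζ : ℂ => Complex.exp (-(0:ℝ) * ζ)) π a = π / Real.Gamma (1 + 0) := by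
  have hA := adm_exp 0
  have h1 : ∀ b : ℝ, Hr (fun ζ : ℂ => Complex.exp (-(0:ℝ) * ζ)) π b =
      (∫ v in (0:ℝ)..π, Complex.exp (Complex.exp (b + v * Complex.I))).re := by
    intro b
    unfold Hr hk
    simp only [exp_exp_pi]
    have : (∫ u in Ioi b, ((Real.exp (-Real.exp u) : ℝ) : ℂ) *
        Complex.exp (-(0:ℝ) * (u + π * Complex.I))).im = 0 := by
      simp only [Complex.ofReal_zero, neg_zero, zero_mul, Complex.exp_zero, mul_one]
      rw [integral_complex_ofReal, Complex.ofReal_im]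
    rw [this]
    simp
  have t : Tendsto (fun b : ℝ => ∫ v in (0:ℝ)..π, Complex.exp (Complex.exp (b + v * Complex.I)))
      atBot (𝓝 (π : ℂ)) := by
    rw [tendsto_iff_norm_sub_tendsto_zero]
    have hlim : Tendsto (fun b : ℝ => 2 * Real.exp b * |π - 0|) atBot (𝓝 0) := by
      simpa using (Real.tendsto_exp_atBot.const_mul 2).mul_const |π - 0|
    refine squeeze_zero' (Eventually.of_forall fun b => norm_nonneg _) ?_ hlim
    filter_upwards [eventually_le_atBot (0:ℝ)] with b hb
    have hc : (π : ℂ) = ∫ v in (0:ℝ)..π, (1 : ℂ) := by simp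
    rw [hc, ← intervalIntegral.integral_sub]
    · refine intervalIntegral.norm_integral_le_of_norm_le_const fun v hv => ?_
      have hn : ‖Complex.exp (b + v * Complex.I)‖ = Real.exp b := by
        rw [Complex.norm_exp]; simp
      have := Complex.norm_exp_sub_one_le (x := Complex.exp (b + v * Complex.I))
        (by rw [hn]; exact Real.exp_le_one_iff.2 hb)
      rwa [hn] at this
    · exact Continuous.intervalIntegrable (by fun_prop) _ _
    · simp
  have t2 := (Complex.continuous_re.tendsto _).comp t
  have t3 : Tendsto (fun b : ℝ => Hr (fun ζ : ℂ => Complex.exp (-(0:ℝ) * ζ)) π b) atBot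
      (𝓝 (π : ℂ).re) := t2.congr fun b => (h1 b).symm
  simp only [fun b => hA.Hr_indep two_pi_div_three_le le_rfl b a] at t3
  have := tendsto_nhds_unique tendsto_const_nhds t3
  rw [this]
  simp

lemma hasDerivAt_g (z : ℝ) (ζ : ℂ) :
    HasDerivAt (fun ζ : ℂ => Complex.exp (Complex.exp ζ) * Complex.exp (-z * ζ))
      (hk (fun ζ : ℂ => Complex.exp (-(z - 1 : ℝ) * ζ)) ζ
        - z * hk (fun ζ : ℂ => Complex.exp (-z * ζ)) ζ) ζ := by
  have h1 := (Complex.hasDerivAt_exp (Complex.exp ζ)).comp ζ (Complex.hasDerivAt_exp ζ)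
  have h2 : HasDerivAt (fun ζ : ℂ => Complex.exp (-z * ζ)) (Complex.exp (-z * ζ) * (-z)) ζ := by
    simpa using ((hasDerivAt_id ζ).const_mul (-z : ℂ)).cexp
  refine (h1.mul h2).congr_deriv ?_
  unfold hk
  simp only [Function.comp]
  rw [show (-((z - 1 : ℝ) : ℂ) * ζ) = ζ + -z * ζ by push_cast; ring, Complex.exp_add]
  ring

lemma hankel_step (z a : ℝ) : Hr (fun ζ : ℂ => Complex.exp (-(z - 1 : ℝ) * ζ)) π a
    = z * Hr (fun ζ : ℂ => Complex.exp (-z * ζ)) π a := by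
  have hA := adm_exp z
  have hB := adm_exp (z - 1)
  set g : ℂ → ℂ := fun ζ : ℂ => Complex.exp (Complex.exp ζ) * Complex.exp (-z * ζ) with hg
  have hI := hA.integrableOn two_pi_div_three_le le_rfl a
  have hJ := hB.integrableOn two_pi_div_three_le le_rfl a
  have i1 : ∫ u in Ioi a, (hk (fun ζ : ℂ => Complex.exp (-(z - 1 : ℝ) * ζ)) (u + π * Complex.I)
      - z * hk (fun ζ : ℂ => Complex.exp (-z * ζ)) (u + π * Complex.I))
      = 0 - g (a + π * Complex.I) := by
    refine integral_Ioi_of_hasDerivAt_of_tendsto' (f := fun u : ℝ => g (u + π * Complex.I))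
      (fun x _ => ?_) (hJ.sub (hI.const_mul (z : ℂ))) ?_
    · have h := ((hasDerivAt_g z (x + π * Complex.I)).comp_add_const
        (x : ℂ) (π * Complex.I)).comp_ofReal
      exact h
    · obtain ⟨C, hC, hb⟩ := hA.bd_line
      have e1 : Tendsto (fun s : ℝ => s ^ (-z) * Real.exp (-(1/2) * s)) atTop (𝓝 0) :=
        tendsto_rpow_mul_exp_neg_mul_atTop_nhds_zero (-z) (1/2) (by norm_num)
      have e3 := (e1.comp Real.tendsto_exp_atTop).const_mul C
      rw [mul_zero] at e3
      refine squeeze_zero_norm (fun u => ?_) e3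
      have hu := hb u π two_pi_div_three_le le_rfl
      simp only [Function.comp]
      rw [← Real.exp_mul, mul_comm u (-z), neg_mul (1/2 : ℝ)]
      exact hu
  have i2 : ∫ v in (0:ℝ)..π, (hk (fun ζ : ℂ => Complex.exp (-(z - 1 : ℝ) * ζ)) (a + v * Complex.I)
      - z * hk (fun ζ : ℂ => Complex.exp (-z * ζ)) (a + v * Complex.I))
      = (-Complex.I) * (g (a + π * Complex.I)) - (-Complex.I) * g (a + (0:ℝ) * Complex.I) := by
    refine intervalIntegral.integral_eq_sub_of_hasDerivAt
      (f := fun v : ℝ => (-Complex.I) * g (a + v * Complex.I)) (fun x _ => ?_) ?_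
    · have h0 : HasDerivAt (fun ζ : ℂ => (a + ζ * Complex.I : ℂ)) Complex.I (x : ℂ) := by
        simpa using ((hasDerivAt_id (x : ℂ)).mul_const Complex.I).const_add (a : ℂ)
      have h := (((hasDerivAt_g z (a + x * Complex.I)).comp (x : ℂ) h0).const_mul
        (-Complex.I)).comp_ofReal
      refine h.congr_deriv ?_
      linear_combination (-(hk (fun ζ : ℂ => Complex.exp (-(z - 1 : ℝ) * ζ)) (a + x * Complex.I)
        - z * hk (fun ζ : ℂ => Complex.exp (-z * ζ)) (a + x * Complex.I))) * Complex.I_sq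
    · exact (hB.intervalIntegrable a le_rfl Real.pi_pos.le le_rfl).sub
        ((hA.intervalIntegrable a le_rfl Real.pi_pos.le le_rfl).const_mul _)
  rw [integral_sub hJ (hI.const_mul (z : ℂ)), integral_const_mul] at i1
  rw [intervalIntegral.integral_sub (hB.intervalIntegrable a le_rfl Real.pi_pos.le le_rfl)
    ((hA.intervalIntegrable a le_rfl Real.pi_pos.le le_rfl).const_mul _),
    intervalIntegral.integral_const_mul] at i2
  have g0 : (g (a + (0:ℝ) * Complex.I)).im = 0 := by
    have : g (a + (0:ℝ) * Complex.I) =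
        ((Real.exp (Real.exp a) * Real.exp (-z * a) : ℝ) : ℂ) := by
      simp [hg]
    rw [this, Complex.ofReal_im]
  have j1 := congrArg Complex.im i1
  have j2 := congrArg Complex.re i2
  simp only [Complex.sub_im, Complex.im_ofReal_mul, Complex.zero_im] at j1
  simp only [Complex.sub_re, Complex.re_ofReal_mul, neg_mul, Complex.neg_re, Complex.I_mul_re,
    neg_neg, g0] at j2
  unfold Hr
  simp only [neg_mul]  at j1 ⊢
  linarith

lemma hankel (z a : ℝ) :
    Hr (fun ζ : ℂ => Complex.exp (-z * ζ)) π a = π / Real.Gamma (1 + z) := by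
  have key : ∀ n : ℕ, ∀ z : ℝ, z < n → 
      Hr (fun ζ : ℂ => Complex.exp (-z * ζ)) π a = π / Real.Gamma (1 + z) := by
    intro n
    induction n with
    | zero => intro z hz; exact hankel_neg (by simpa using hz) a
    | succ n ih =>
      intro z hz
      push_cast at hz
      rcases lt_trichotomy z 0 with h | h | h
      · exact hankel_neg h a
      · subst h; exact hankel_zero a
      · have h1 := hankel_step z a
        rw [ih (z - 1) (by linarith)] at h1
        rw [add_comm 1 z, Real.Gamma_add_one h.ne']
        rw [show 1 + (z - 1) = z by ring] at h1
        have := Real.Gamma_pos_of_pos h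
        field_simp at h1 ⊢
        linarith
  obtain ⟨n, hn⟩ := exists_nat_gt z
  exact key n z hn

end ML

open Set Real

namespace ML
open MeasureTheory Filter Topology

lemma normSq_add (r θ x : ℝ) : ‖(r : ℂ) * Complex.exp (θ * Complex.I) + x‖ ^ 2
    = r ^ 2 + 2 * r * x * Real.cos θ + x ^ 2 := by
  rw [← Complex.normSq_eq_norm_sq, Complex.normSq_apply]
  simp only [Complex.add_re, Complex.add_im, Complex.re_ofReal_mul, Complex.im_ofReal_mul,
    Complex.exp_ofReal_mul_I_re, Complex.exp_ofReal_mul_I_im, Complex.ofReal_re, Complex.ofReal_im]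
  linear_combination r ^ 2 * Real.sin_sq_add_cos_sq θ

lemma exp_split (ρ : ℝ) (ζ : ℂ) : Complex.exp (ρ * ζ)
    = ((Real.exp (ρ * ζ.re) : ℝ) : ℂ) * Complex.exp (((ρ * ζ.im : ℝ) : ℂ) * Complex.I) := by
  rw [Complex.ofReal_exp, ← Complex.exp_add]
  congr 1
  conv_lhs => rw [← Complex.re_add_im ζ]
  push_cast
  ring

lemma one_add_cos_pos {ρ₂ : ℝ} (h1 : 1 / 2 ≤ ρ₂) (h2 : ρ₂ < 1) :
    0 < 1 + Real.cos (ρ₂ * π) ∧ Real.cos (ρ₂ * π) ≤ 0 := by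
  have hp := Real.pi_pos
  constructor
  · have : Real.cos π < Real.cos (ρ₂ * π) :=
      Real.cos_lt_cos_of_nonneg_of_le_pi (by positivity) le_rfl (by nlinarith)
    rw [Real.cos_pi] at this
    linarith
  · exact Real.cos_nonpos_of_pi_div_two_le_of_le (by nlinarith) (by nlinarith)

/-- lower bound on the denominator -/
lemma norm_low {ρ ρ₂ x : ℝ} (hρ : 0 ≤ ρ) (hρ2 : ρ ≤ ρ₂) (h1 : 1 / 2 ≤ ρ₂) (h2 : ρ₂ < 1)
    (hx : 0 < x) {ζ : ℂ} (hz1 : 0 ≤ ζ.im) (hz2 : ζ.im ≤ π) :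
    (1 + Real.cos (ρ₂ * π)) * x ^ 2 ≤ ‖Complex.exp (ρ * ζ) + x‖ ^ 2 := by
  obtain ⟨hc1, hc2⟩ := one_add_cos_pos h1 h2
  have hp := Real.pi_pos
  rw [exp_split, normSq_add]
  have hcos : Real.cos (ρ₂ * π) ≤ Real.cos (ρ * ζ.im) :=
    Real.cos_le_cos_of_nonneg_of_le_pi (by positivity) (by nlinarith)
      (mul_le_mul hρ2 hz2 hz1 (by linarith))
  have hr := Real.exp_pos (ρ * ζ.re)
  set r := Real.exp (ρ * ζ.re)
  set c := Real.cos (ρ₂ * π)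
  have e1 : 2 * r * x * c ≤ 2 * r * x * Real.cos (ρ * ζ.im) := by gcongr
  nlinarith [sq_nonneg (r - x), mul_nonneg hc1.le (sq_nonneg r), mul_nonneg (neg_nonneg.2 hc2) (sq_nonneg (r - x))]

lemma den_low {ρ x : ℝ} (hρ : 0 < ρ) (hρ1 : ρ < 1) (hx : 0 < x) :
    ∃ δ : ℝ, 0 < δ ∧ ∀ ζ : ℂ, 0 ≤ ζ.im → ζ.im ≤ π → δ ≤ ‖Complex.exp (ρ * ζ) + x‖ := by
  obtain ⟨hc1, hc2⟩ := one_add_cos_pos (ρ₂ := (1 + ρ) / 2) (by linarith) (by linarith)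
  refine ⟨√((1 + Real.cos ((1 + ρ) / 2 * π)) * x ^ 2), by positivity, fun ζ h1 h2 => ?_⟩
  apply Real.sqrt_le_iff.2
  exact ⟨norm_nonneg _, norm_low hρ.le (by linarith) (by linarith) (by linarith) hx h1 h2⟩

/-- the kernels -/
noncomputable def k1 (ρ x : ℝ) (ζ : ℂ) : ℂ := Complex.exp (ρ * ζ) / (Complex.exp (ρ * ζ) + x)
noncomputable def k2 (ρ x : ℝ) (ζ : ℂ) : ℂ :=
  -(Complex.exp (ρ * ζ) ^ 2 / (x * (Complex.exp (ρ * ζ) + x)))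

lemma norm_exp_mul (ρ : ℝ) (ζ : ℂ) : ‖Complex.exp (ρ * ζ)‖ = Real.exp (ρ * ζ.re) := by
  rw [Complex.norm_exp]; simp

lemma adm_k1 {ρ x : ℝ} (hρ : 0 < ρ) (hρ1 : ρ < 1) (hx : 0 < x) : Adm (k1 ρ x) ρ := by
  obtain ⟨δ, hδ, hd⟩ := den_low hρ hρ1 hx
  refine ⟨fun ζ h1 h2 => ?_, fun u => ?_, 1 / δ, by positivity, fun ζ h1 h2 => ?_⟩
  · have : Complex.exp (ρ * ζ) + x ≠ 0 := norm_pos_iff.1 (hδ.trans_le (hd ζ h1 h2))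
    unfold k1
    fun_prop (disch := assumption)
  · unfold k1
    rw [← Complex.ofReal_mul, ← Complex.ofReal_exp, ← Complex.ofReal_add, ← Complex.ofReal_div,
      Complex.ofReal_im]
  · unfold k1
    rw [norm_div, norm_exp_mul, div_mul_eq_mul_div, one_mul]
    gcongr
    exact hd ζ h1 h2

lemma adm_k2 {ρ x : ℝ} (hρ : 0 < ρ) (hρ1 : ρ < 1) (hx : 0 < x) : Adm (k2 ρ x) (2 * ρ) := by
  obtain ⟨δ, hδ, hd⟩ := den_low hρ hρ1 hx
  refine ⟨fun ζ h1 h2 => ?_, fun u => ?_, 1 / (x * δ), by positivity, fun ζ h1 h2 => ?_⟩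
  · have h3 : Complex.exp (ρ * ζ) + x ≠ 0 := norm_pos_iff.1 (hδ.trans_le (hd ζ h1 h2))
    have h4 : (x : ℂ) * (Complex.exp (ρ * ζ) + x) ≠ 0 :=
      mul_ne_zero (Complex.ofReal_ne_zero.2 hx.ne') h3
    unfold k2
    fun_prop (disch := assumption)
  · unfold k2
    rw [← Complex.ofReal_mul, ← Complex.ofReal_exp, ← Complex.ofReal_add, ← Complex.ofReal_mul,
      ← Complex.ofReal_pow, ← Complex.ofReal_div, ← Complex.ofReal_neg, Complex.ofReal_im]
  · unfold k2
    rw [norm_neg, norm_div, norm_pow, norm_mul, norm_exp_mul, div_mul_eq_mul_div, one_mul,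
      Complex.norm_real, Real.norm_of_nonneg hx.le, ← Real.exp_nat_mul]
    rw [show 2 * ρ * ζ.re = ((2:ℕ):ℝ) * (ρ * ζ.re) by push_cast; ring]
    gcongr
    exact hd ζ h1 h2

lemma ratio_norm {ρ x a : ℝ} (hρ : 0 < ρ) (hx : 0 < x) (ha : Real.exp (ρ * a) = 2 * x)
    {ζ : ℂ} (h : a ≤ ζ.re) : ‖-(x : ℂ) * Complex.exp (-ρ * ζ)‖ ≤ 1 / 2 := by
  rw [norm_mul, norm_neg, Complex.norm_real, Real.norm_of_nonneg hx.le, Complex.norm_exp]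
  have : (-(ρ : ℂ) * ζ).re = -(ρ * ζ.re) := by simp
  rw [this, Real.exp_neg, ← div_eq_mul_inv, div_le_iff₀ (Real.exp_pos _)]
  have : Real.exp (ρ * a) ≤ Real.exp (ρ * ζ.re) := by gcongr
  linarith

lemma term_eq (ρ x : ℝ) (n : ℕ) (ζ : ℂ) :
    (-x : ℂ) ^ n * Complex.exp (-((ρ * n : ℝ) : ℂ) * ζ) =
      (-(x : ℂ) * Complex.exp (-ρ * ζ)) ^ n := by
  rw [mul_pow, ← Complex.exp_nat_mul]
  congr 2
  push_cast
  ring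

lemma hasSum_k1 {ρ x a : ℝ} (hρ : 0 < ρ) (hx : 0 < x) (ha : Real.exp (ρ * a) = 2 * x)
    {ζ : ℂ} (h : a ≤ ζ.re) :
    HasSum (fun n : ℕ => (-x : ℂ) ^ n * hk (fun ζ => Complex.exp (-((ρ * n : ℝ) : ℂ) * ζ)) ζ)
      (hk (k1 ρ x) ζ) := by
  have hn := ratio_norm hρ hx ha h
  have hs := (hasSum_geometric_of_norm_lt_one (lt_of_le_of_lt hn (by norm_num))).mul_left
    (Complex.exp (Complex.exp ζ))
  have he : Complex.exp (ρ * ζ) ≠ 0 := Complex.exp_ne_zero _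
  have h1 : (1 - -(x : ℂ) * Complex.exp (-ρ * ζ))⁻¹ = k1 ρ x ζ := by
    unfold k1
    rw [neg_mul (ρ : ℂ), Complex.exp_neg]
    rw [show 1 - -(x : ℂ) * (Complex.exp (ρ * ζ))⁻¹ =
      (Complex.exp (ρ * ζ) + x) / Complex.exp (ρ * ζ) by field_simp; ring, inv_div]
  rw [h1] at hs
  have hfun : (fun n : ℕ => (-x : ℂ) ^ n *
      hk (fun ζ => Complex.exp (-((ρ * n : ℝ) : ℂ) * ζ)) ζ) = fun n : ℕ =>
      Complex.exp (Complex.exp ζ) * (-(x : ℂ) * Complex.exp (-ρ * ζ)) ^ n := by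
    funext n
    unfold hk
    beta_reduce
    rw [← term_eq]
    ring
  rw [hfun]
  exact hs

lemma term_bound {ρ x a : ℝ} (hρ : 0 < ρ) (hx : 0 < x) (ha : Real.exp (ρ * a) = 2 * x)
    {ζ : ℂ} (h : a ≤ ζ.re) (n : ℕ) :
    ‖(-x : ℂ) ^ n * hk (fun ζ => Complex.exp (-((ρ * n : ℝ) : ℂ) * ζ)) ζ‖
      ≤ (1 / 2) ^ n * ‖Complex.exp (Complex.exp ζ)‖ := by
  unfold hk
  beta_reduce
  rw [mul_left_comm, term_eq, norm_mul, norm_pow, mul_comm]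
  gcongr
  exact ratio_norm hρ hx ha h

lemma summable_half (c : ℝ) : Summable (fun n : ℕ => (1 / 2 : ℝ) ^ n * c) :=
  summable_geometric_two.mul_right c

lemma series {ρ x : ℝ} (hρ : 0 < ρ) (hρ1 : ρ < 1) (hx : 0 < x) (a' : ℝ) :
    Hr (k1 ρ x) π a' = π * mittagLeffler ρ (-x) := by
  obtain ⟨a, ha⟩ : ∃ a : ℝ, Real.exp (ρ * a) = 2 * x :=
    ⟨Real.log (2 * x) / ρ, by rw [mul_div_cancel₀ _ hρ.ne', Real.exp_log (by positivity)]⟩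
  rw [(adm_k1 hρ hρ1 hx).Hr_indep two_pi_div_three_le le_rfl a' a]
  have s1 : HasSum (fun n : ℕ => ∫ u in Ioi a, (-x : ℂ) ^ n *
      hk (fun ζ => Complex.exp (-((ρ * n : ℝ) : ℂ) * ζ)) (u + π * Complex.I))
      (∫ u in Ioi a, hk (k1 ρ x) (u + π * Complex.I)) := by
    refine hasSum_integral_of_dominated_convergence
      (fun n u => (1 / 2) ^ n * ‖Complex.exp (Complex.exp (u + π * Complex.I))‖) ?_ ?_ ?_ ?_ ?_
    · intro n
      exact (((adm_exp (ρ * n)).integrableOn two_pi_div_three_le le_rfl a).const_mul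
        _).aestronglyMeasurable
    · intro n
      refine (ae_restrict_mem measurableSet_Ioi).mono fun u hu => ?_
      exact term_bound hρ hx ha (by simpa using le_of_lt (mem_Ioi.1 hu)) n
    · exact Eventually.of_forall fun u => summable_half _
    · simp only [tsum_mul_right]
      refine Integrable.const_mul ?_ _
      simp only [norm_exp_exp, Real.cos_pi]
      have := integrableOn_gexp 0 a (c := 1) one_pos
      simpa [IntegrableOn] using this
    · refine (ae_restrict_mem measurableSet_Ioi).mono fun u hu => ?_
      exact hasSum_k1 hρ hx ha (by simpa using le_of_lt (mem_Ioi.1 hu))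
  have s2 : HasSum (fun n : ℕ => ∫ v in (0:ℝ)..π, (-x : ℂ) ^ n *
      hk (fun ζ => Complex.exp (-((ρ * n : ℝ) : ℂ) * ζ)) (a + v * Complex.I))
      (∫ v in (0:ℝ)..π, hk (k1 ρ x) (a + v * Complex.I)) := by
    refine intervalIntegral.hasSum_integral_of_dominated_convergence
      (fun n v => (1 / 2) ^ n * ‖Complex.exp (Complex.exp (a + v * Complex.I))‖) ?_ ?_ ?_ ?_ ?_
    · intro n
      have := ((adm_exp (ρ * n)).intervalIntegrable a le_rfl Real.pi_pos.le le_rfl).const_mul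
        ((-x : ℂ) ^ n)
      rw [intervalIntegrable_iff] at this
      exact this.aestronglyMeasurable
    · exact fun n => Eventually.of_forall fun v _ => term_bound hρ hx ha (by simp) n
    · exact Eventually.of_forall fun u _ => summable_half _
    · simp only [tsum_mul_right]
      exact Continuous.intervalIntegrable (by fun_prop) _ _
    · exact Eventually.of_forall fun v _ => hasSum_k1 hρ hx ha (by simp)
  have s3 := (Complex.hasSum_im s1).add (Complex.hasSum_re s2)
  have s4 : HasSum (fun n : ℕ => π * ((-x) ^ n / Real.Gamma (ρ * n + 1))) (Hr (k1 ρ x) π a) := by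
    unfold Hr at *
    convert s3 using 2 with n
    rw [integral_const_mul, intervalIntegral.integral_const_mul, ← Complex.ofReal_neg,
      ← Complex.ofReal_pow, Complex.im_ofReal_mul, Complex.re_ofReal_mul, ← mul_add]
    have := hankel (ρ * n) a
    unfold Hr at this
    rw [this, add_comm 1]
    ring
  have hp := Real.pi_pos
  unfold mittagLeffler
  rw [← tsum_mul_left, s4.tsum_eq]

lemma k2_eq {ρ x : ℝ} (hρ : 0 < ρ) (hρ1 : ρ < 1) (hx : 0 < x) {ζ : ℂ}
    (h1 : 0 ≤ ζ.im) (h2 : ζ.im ≤ π) :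
    hk (k2 ρ x) ζ = hk (k1 ρ x) ζ -
      ((1 / x : ℝ) : ℂ) * hk (fun ζ => Complex.exp (-((-ρ : ℝ) : ℂ) * ζ)) ζ := by
  obtain ⟨δ, hδ, hd⟩ := den_low hρ hρ1 hx
  have h3 : Complex.exp (ρ * ζ) + x ≠ 0 := norm_pos_iff.1 (hδ.trans_le (hd ζ h1 h2))
  have h4 : (x : ℂ) ≠ 0 := Complex.ofReal_ne_zero.2 hx.ne'
  unfold hk k1 k2
  push_cast
  rw [neg_neg]
  field_simp
  ring

lemma repr {ρ x φ : ℝ} (hρ : 0 < ρ) (hρ1 : ρ < 1) (hx : 0 < x) (h1 : 2 * π / 3 ≤ φ)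
    (h2 : φ ≤ π) : mittagLeffler ρ (-x) = 1 / (x * Real.Gamma (1 - ρ)) +
      (1 / π) * (∫ u : ℝ, hk (k2 ρ x) (u + φ * Complex.I)).im := by
  have hA := adm_k2 hρ hρ1 hx
  have hB := adm_k1 hρ hρ1 hx
  have hC := adm_exp (-ρ)
  have hp := Real.pi_pos
  rw [← hA.Hr_eq (by positivity) h1 h2 0, ← hA.Hr_shift h1 h2]
  have e1 : Hr (k2 ρ x) π 0 = Hr (k1 ρ x) π 0 -
      (1 / x) * Hr (fun ζ => Complex.exp (-((-ρ : ℝ) : ℂ) * ζ)) π 0 := by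
    have i1 : ∫ u in Ioi (0:ℝ), hk (k2 ρ x) (u + π * Complex.I) =
        ∫ u in Ioi (0:ℝ), (hk (k1 ρ x) (u + π * Complex.I) - ((1 / x : ℝ) : ℂ) *
          hk (fun ζ => Complex.exp (-((-ρ : ℝ) : ℂ) * ζ)) (u + π * Complex.I)) := by
      congr 1
      ext u
      exact k2_eq hρ hρ1 hx (by simpa using hp.le) (by simp)
    have i2 : ∫ v in (0:ℝ)..π, hk (k2 ρ x) ((0:ℝ) + v * Complex.I) =
        ∫ v in (0:ℝ)..π, (hk (k1 ρ x) ((0:ℝ) + v * Complex.I) - ((1 / x : ℝ) : ℂ) *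
          hk (fun ζ => Complex.exp (-((-ρ : ℝ) : ℂ) * ζ)) ((0:ℝ) + v * Complex.I)) := by
      refine intervalIntegral.integral_congr fun v hv => ?_
      rw [uIcc_of_le hp.le] at hv
      exact k2_eq hρ hρ1 hx (by simpa using hv.1) (by simpa using hv.2)
    rw [integral_sub (hB.integrableOn two_pi_div_three_le le_rfl 0)
      ((hC.integrableOn two_pi_div_three_le le_rfl 0).const_mul _), integral_const_mul] at i1
    rw [intervalIntegral.integral_sub (hB.intervalIntegrable 0 le_rfl hp.le le_rfl)
      ((hC.intervalIntegrable 0 le_rfl hp.le le_rfl).const_mul _),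
      intervalIntegral.integral_const_mul] at i2
    unfold Hr
    rw [i1, i2, Complex.sub_im, Complex.sub_re, Complex.im_ofReal_mul, Complex.re_ofReal_mul]
    ring
  rw [e1, series hρ hρ1 hx, hankel, ← sub_eq_add_neg]
  have : 0 < Real.Gamma (1 - ρ) := Real.Gamma_pos_of_pos (by linarith)
  field_simp
  ring

end ML

open Set Real

namespace ML
open MeasureTheory Filter Topology

/-- derivative kernel -/
noncomputable def kd (ρ lam : ℝ) (ζ : ℂ) : ℂ :=
  -(Complex.exp (ρ * ζ) ^ 2 * (Complex.exp (ρ * ζ) + 2 * lam) /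
    (lam * (Complex.exp (ρ * ζ) + lam) ^ 2))

lemma hasDerivAt_k2 {ρ lam : ℝ} {ζ : ℂ} (hlam : 0 < lam) (h : Complex.exp (ρ * ζ) + lam ≠ 0) :
    HasDerivAt (fun ρ : ℝ => k2 ρ lam ζ) (ζ * kd ρ lam ζ) ρ := by
  have hl : (lam : ℂ) ≠ 0 := Complex.ofReal_ne_zero.2 hlam.ne'
  have h1 : HasDerivAt (fun s : ℂ => Complex.exp (s * ζ)) (Complex.exp (ρ * ζ) * ζ) (ρ : ℂ) := by
    simpa using ((hasDerivAt_id (ρ : ℂ)).mul_const ζ).cexp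
  have h2 := ((h1.pow 2).div ((h1.add_const (lam : ℂ)).const_mul (lam : ℂ))
    (mul_ne_zero hl h)).neg
  have h3 := h2.comp_ofReal
  refine h3.congr_deriv ?_
  unfold kd
  simp only [Pi.pow_apply]
  field_simp
  ring

lemma norm_kd_le {ρ lam δ : ℝ} {ζ : ℂ} (hlam : 0 < lam) (hδ : 0 < δ)
    (h : δ ≤ ‖Complex.exp (ρ * ζ) + lam‖) :
    ‖kd ρ lam ζ‖ ≤ (1 / δ + lam / δ ^ 2) / lam * Real.exp (2 * ρ * ζ.re) := by
  unfold kd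
  have hn : ‖Complex.exp (ρ * ζ) + 2 * lam‖ ≤ ‖Complex.exp (ρ * ζ) + lam‖ + lam := by
    have := norm_add_le (Complex.exp (ρ * ζ) + lam) (lam : ℂ)
    rw [Complex.norm_real, Real.norm_of_nonneg hlam.le] at this
    refine le_trans (le_of_eq ?_) this
    congr 1
    ring
  rw [norm_neg, norm_div, norm_mul, norm_mul, norm_pow, norm_pow, norm_exp_mul,
    Complex.norm_real, Real.norm_of_nonneg hlam.le, ← Real.exp_nat_mul,
    show ((2:ℕ):ℝ) * (ρ * ζ.re) = 2 * ρ * ζ.re by push_cast; ring]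
  set n := ‖Complex.exp (ρ * ζ) + lam‖
  have hnp : 0 < n := hδ.trans_le h
  calc _ ≤ Real.exp (2 * ρ * ζ.re) * (n + lam) / (lam * n ^ 2) := by gcongr
    _ = (1 / n + lam / n ^ 2) / lam * Real.exp (2 * ρ * ζ.re) := by field_simp
    _ ≤ _ := by gcongr

lemma integrable_gexp_shift {s : ℝ} (hs : 0 < s) (T : ℝ) :
    Integrable (fun u : ℝ => Real.exp (s * (u - T)) * Real.exp (-((1/2) * Real.exp u))) := by
  have := (integrable_gexp hs (c := 1/2) (by norm_num)).1.const_mul (Real.exp (-(s * T)))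
  refine this.congr (Eventually.of_forall fun u => ?_)
  simp only
  rw [← mul_assoc, ← Real.exp_add]
  ring_nf

lemma abs_le_exp {c : ℝ} (hc : 0 < c) (v : ℝ) :
    |v| ≤ (Real.exp (c * v) + Real.exp (-(c * v))) / c := by
  rw [le_div_iff₀ hc]
  have h1 := Real.add_one_le_exp (c * v)
  have h2 := Real.add_one_le_exp (-(c * v))
  have h3 := Real.exp_pos (c * v)
  have h4 := Real.exp_pos (-(c * v))
  rcases abs_cases v with ⟨h, _⟩ | ⟨h, _⟩ <;> rw [h] <;> nlinarith

lemma exp_between {a b c : ℝ} (h1 : a ≤ b) (h2 : b ≤ c) (v : ℝ) :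
    Real.exp (2 * b * v) ≤ Real.exp (2 * a * v) + Real.exp (2 * c * v) := by
  rcases le_total 0 v with h | h
  · have : Real.exp (2 * b * v) ≤ Real.exp (2 * c * v) := by gcongr
    linarith [Real.exp_pos (2 * a * v)]
  · have : Real.exp (2 * b * v) ≤ Real.exp (2 * a * v) := by
      rw [Real.exp_le_exp]; nlinarith
    linarith [Real.exp_pos (2 * c * v)]

noncomputable def Fd (ρ lam T φ u : ℝ) : ℂ :=
  Complex.exp (Complex.exp (u + φ * Complex.I)) *
    (((u - T : ℝ) + φ * Complex.I) * kd ρ lam ((u - T : ℝ) + φ * Complex.I))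

lemma k2_shift {ρ lam t : ℝ} (ht : 0 < t) (hlam : 0 < lam) (φ u : ℝ) :
    k2 ρ (lam * t ^ ρ) (u + φ * Complex.I) =
      k2 ρ lam ((u - Real.log t : ℝ) + φ * Complex.I) := by
  have hl : (lam : ℂ) ≠ 0 := Complex.ofReal_ne_zero.2 hlam.ne'
  have e : Complex.exp (ρ * (u + φ * Complex.I)) =
      ((t ^ ρ : ℝ) : ℂ) * Complex.exp (ρ * ((u - Real.log t : ℝ) + φ * Complex.I)) := by
    rw [Real.rpow_def_of_pos ht, Complex.ofReal_exp, ← Complex.exp_add]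
    congr 1
    push_cast
    ring
  have hp : ((t ^ ρ : ℝ) : ℂ) ≠ 0 := Complex.ofReal_ne_zero.2 (Real.rpow_pos_of_pos ht ρ).ne'
  unfold k2
  rw [e]
  set q := Complex.exp (ρ * ((u - Real.log t : ℝ) + φ * Complex.I))
  rw [Complex.ofReal_mul]
  set p := ((t ^ ρ : ℝ) : ℂ)
  rw [show (lam : ℂ) * p * (p * q + lam * p) = p ^ 2 * (lam * (q + lam)) by ring, mul_pow,
    mul_div_mul_left _ _ (pow_ne_zero 2 hp)]

lemma deriv_integral {ρ lam t φ : ℝ} (hρ : 0 < ρ) (hρ1 : ρ < 1) (hlam : 0 < lam) (ht : 0 < t)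
    (h1 : 2 * π / 3 ≤ φ) (h2 : φ ≤ π) :
    Integrable (Fd ρ lam (Real.log t) φ) ∧
    HasDerivAt (fun ρ : ℝ => ∫ u : ℝ, hk (k2 ρ (lam * t ^ ρ)) (u + φ * Complex.I))
      (∫ u : ℝ, Fd ρ lam (Real.log t) φ u) ρ := by
  have h0 : 0 ≤ φ := le_trans (by positivity) h1
  set T := Real.log t with hT
  obtain ⟨hc1, hc2⟩ := one_add_cos_pos (ρ₂ := (1 + ρ) / 2) (by linarith) (by linarith)
  set δ := √((1 + Real.cos ((1 + ρ) / 2 * π)) * lam ^ 2) with hδ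
  have hδp : 0 < δ := by positivity
  have hlow : ∀ r ∈ Ioo (ρ / 2) ((1 + ρ) / 2), ∀ ζ : ℂ, 0 ≤ ζ.im → ζ.im ≤ π →
      δ ≤ ‖Complex.exp (r * ζ) + lam‖ := fun r hr ζ hz1 hz2 => Real.sqrt_le_iff.2
    ⟨norm_nonneg _, norm_low (by linarith [hr.1]) hr.2.le (by linarith) (by linarith) hlam hz1 hz2⟩
  have him : ∀ v : ℝ, ((v : ℂ) + φ * Complex.I).im = φ := by intro v; simp
  have hre : ∀ v : ℝ, ((v : ℂ) + φ * Complex.I).re = v := by intro v; simp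
  set C := (1 / δ + lam / δ ^ 2) / lam with hC
  have hCp : 0 < C := by positivity
  refine hasDerivAt_integral_of_dominated_loc_of_deriv_le
    (s := Ioo (ρ / 2) ((1 + ρ) / 2))
    (F := fun ρ u => hk (k2 ρ (lam * t ^ ρ)) (u + φ * Complex.I))
    (F' := fun ρ u => Fd ρ lam T φ u)
    (bound := fun u => Real.exp (-((1/2) * Real.exp u)) *
      (((Real.exp (ρ / 2 * (u - T)) + Real.exp (-(ρ / 2 * (u - T)))) / (ρ / 2) + π) *
      (C * (Real.exp (2 * (ρ / 2) * (u - T)) + Real.exp (2 * ((1 + ρ) / 2) * (u - T))))))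
    (Ioo_mem_nhds (by linarith) (by linarith)) ?_ ?_ ?_ ?_ ?_ ?_
  · filter_upwards [Ioo_mem_nhds hρ hρ1] with r hr
    exact ((adm_k2 hr.1 hr.2 (by positivity)).cont_line h0 h2).aestronglyMeasurable
  · exact (adm_k2 hρ hρ1 (by positivity)).integrable (by positivity) h1 h2
  · refine Continuous.aestronglyMeasurable ?_
    unfold Fd kd
    have hl : (lam : ℂ) ≠ 0 := Complex.ofReal_ne_zero.2 hlam.ne'
    have : ∀ u : ℝ, (lam : ℂ) * (Complex.exp (ρ * ((u - T : ℝ) + φ * Complex.I)) + lam) ^ 2 ≠ 0 := by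
      intro u
      refine mul_ne_zero hl (pow_ne_zero 2 (norm_pos_iff.1 (hδp.trans_le (hlow ρ ?_ _ ?_ ?_))))
      · constructor <;> linarith
      · rw [him]; exact h0
      · rw [him]; exact h2
    fun_prop (disch := exact this _)
  · refine Eventually.of_forall fun u r hr => ?_
    unfold Fd
    rw [norm_mul, norm_mul]
    refine mul_le_mul (norm_exp_exp_le h1 h2) ?_ (by positivity) (by positivity)
    refine mul_le_mul ?_ ?_ (by positivity) (by positivity)
    · refine (norm_add_le _ _).trans (add_le_add ?_ ?_)
      · rw [Complex.norm_real]
        exact abs_le_exp (by linarith) _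
      · rw [norm_mul, Complex.norm_I, mul_one, Complex.norm_real, Real.norm_of_nonneg h0]
        exact h2
    · refine (norm_kd_le hlam hδp (hlow r hr _ (by rw [him]; exact h0)
        (by rw [him]; exact h2))).trans ?_
      rw [hre]
      gcongr
      exact exp_between hr.1.le hr.2.le _
  · have i1 := integrable_gexp_shift (s := 3 * (ρ / 2)) (by positivity) T
    have i2 := integrable_gexp_shift (s := ρ / 2) (by positivity) T
    have i3 := integrable_gexp_shift (s := ρ) (by positivity) T
    have i4 := integrable_gexp_shift (s := 1 + ρ + ρ / 2) (by positivity) T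
    have i5 := integrable_gexp_shift (s := 1 + ρ / 2) (by positivity) T
    have i6 := integrable_gexp_shift (s := 1 + ρ) (by positivity) T
    have := ((((i1.add i2).add (i4.add i5)).const_mul (C * (2 / ρ))).add
      ((i3.add i6).const_mul (C * π)))
    refine this.congr (Eventually.of_forall fun u => ?_)
    simp only [Pi.add_apply]
    set v := u - T
    have e1 : Real.exp (3 * (ρ / 2) * v) = Real.exp (ρ / 2 * v) ^ 3 := by
      rw [← Real.exp_nat_mul]; congr 1; push_cast; ring
    have e3 : Real.exp (ρ * v) = Real.exp (ρ / 2 * v) ^ 2 := by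
      rw [← Real.exp_nat_mul]; congr 1; push_cast; ring
    have e3' : Real.exp (2 * (ρ / 2) * v) = Real.exp (ρ / 2 * v) ^ 2 := by
      rw [← Real.exp_nat_mul]; congr 1; push_cast; ring
    have e4 : Real.exp ((1 + ρ + ρ / 2) * v) = Real.exp v * Real.exp (ρ / 2 * v) ^ 3 := by
      rw [← Real.exp_nat_mul, ← Real.exp_add]; congr 1; push_cast; ring
    have e5 : Real.exp ((1 + ρ / 2) * v) = Real.exp v * Real.exp (ρ / 2 * v) := by
      rw [← Real.exp_add]; congr 1; ring
    have e6 : Real.exp ((1 + ρ) * v) = Real.exp v * Real.exp (ρ / 2 * v) ^ 2 := by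
      rw [← Real.exp_nat_mul, ← Real.exp_add]; congr 1; push_cast; ring
    have e6' : Real.exp (2 * ((1 + ρ) / 2) * v) = Real.exp v * Real.exp (ρ / 2 * v) ^ 2 := by
      rw [← Real.exp_nat_mul, ← Real.exp_add]; congr 1; push_cast; ring
    rw [e1, e3, e3', e4, e5, e6, e6', Real.exp_neg (ρ / 2 * v)]
    have hE := Real.exp_pos (ρ / 2 * v)
    field_simp
  · refine Eventually.of_forall fun u r hr => ?_
    have hne : Complex.exp (r * ((u - T : ℝ) + φ * Complex.I)) + lam ≠ 0 :=
      norm_pos_iff.1 (hδp.trans_le (hlow r hr _ (by rw [him]; exact h0) (by rw [him]; exact h2)))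
    have := (hasDerivAt_k2 hlam hne).const_mul (Complex.exp (Complex.exp (u + φ * Complex.I)))
    refine this.congr_of_eventuallyEq (Eventually.of_forall fun r' => ?_)
    simp only [hk]
    rw [k2_shift ht hlam]

lemma im_integral_le {F : ℝ → ℂ} {g : ℝ → ℝ} (hF : Integrable F) (hg : Integrable g)
    (h : ∀ u, |(F u).im| ≤ g u) : |(∫ u, F u).im| ≤ ∫ u, g u := by
  have h1 : (∫ u, F u).im = ∫ u, (F u).im := by
    have := Complex.imCLM.integral_comp_comm hF
    simpa using this.symm
  rw [h1]
  exact norm_integral_le_of_norm_le hg (Eventually.of_forall fun u => by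
    rw [Real.norm_eq_abs]; exact h u)

end ML

open Set Real

namespace ML
open MeasureTheory Filter Topology

lemma Gamma_le_one {s : ℝ} (h1 : 1 ≤ s) (h2 : s ≤ 2) : Real.Gamma s ≤ 1 := by
  have := Real.convexOn_Gamma.2 (show (1:ℝ) ∈ Ioi 0 by simp) (show (2:ℝ) ∈ Ioi 0 by simp)
    (show (0:ℝ) ≤ 2 - s by linarith) (show (0:ℝ) ≤ s - 1 by linarith) (by ring)
  simp only [smul_eq_mul, Real.Gamma_one, Real.Gamma_two] at this
  rw [show (2 - s) * 1 + (s - 1) * 2 = s by ring] at this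
  linarith

lemma Gamma_le_two {s : ℝ} (h1 : 1 ≤ s) (h2 : s ≤ 3) : Real.Gamma s ≤ 2 := by
  have h3 : Real.Gamma 3 = 2 := by
    rw [show (3:ℝ) = 2 + 1 by norm_num, Real.Gamma_add_one (by norm_num), Real.Gamma_two]; norm_num
  have := Real.convexOn_Gamma.2 (show (1:ℝ) ∈ Ioi 0 by simp) (show (3:ℝ) ∈ Ioi 0 by simp)
    (show (0:ℝ) ≤ (3 - s) / 2 by linarith) (show (0:ℝ) ≤ (s - 1) / 2 by linarith) (by ring)
  simp only [smul_eq_mul, Real.Gamma_one, h3] at this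
  rw [show (3 - s) / 2 * 1 + (s - 1) / 2 * 3 = s by ring] at this
  linarith

lemma deriv_Gamma_le {s : ℝ} (h1 : 1 < s) : deriv Real.Gamma s ≤ Real.log s * Real.Gamma s := by
  have hs : 0 < s := by linarith
  have hG := Real.Gamma_pos_of_pos hs
  have hd : HasDerivAt Real.Gamma (deriv Real.Gamma s) s :=
    (Real.differentiableAt_Gamma fun m => by
      have : (0:ℝ) ≤ m := m.cast_nonneg
      linarith).hasDerivAt
  have hl : HasDerivAt (Real.log ∘ Real.Gamma) (deriv Real.Gamma s / Real.Gamma s) s :=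
    hd.log hG.ne'
  have := Real.convexOn_log_Gamma.le_slope_of_hasDerivAt (x := s) (y := s + 1) (mem_Ioi.2 hs)
    (mem_Ioi.2 (by linarith)) (by linarith) hl
  rw [slope_def_field] at this
  simp only [Function.comp] at this
  rw [Real.Gamma_add_one hs.ne', Real.log_mul hs.ne' hG.ne'] at this
  rw [show (Real.log s + Real.log (Real.Gamma s) - Real.log (Real.Gamma s)) / (s + 1 - s)
    = Real.log s by simp, div_le_iff₀ hG] at this
  exact this

lemma main_term {ρ lam t : ℝ} (hρ : 0 < ρ) (hρ1 : ρ < 1) (hlam : 0 < lam) (ht : 2 ≤ t) :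
    ∃ A' : ℝ, HasDerivAt (fun ρ : ℝ => 1 / (lam * t ^ ρ * Real.Gamma (1 - ρ))) A' ρ ∧
      A' ≤ -(1 / (lam * t ^ ρ)) := by
  have ht0 : 0 < t := by linarith
  have hG : 0 < Real.Gamma (2 - ρ) := Real.Gamma_pos_of_pos (by linarith)
  have hx : 0 < t ^ ρ := Real.rpow_pos_of_pos ht0 ρ
  have hd : HasDerivAt Real.Gamma (deriv Real.Gamma (2 - ρ)) (2 - ρ) :=
    (Real.differentiableAt_Gamma fun m => by
      have : (0:ℝ) ≤ m := m.cast_nonneg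
      linarith).hasDerivAt
  have hd2 : HasDerivAt (fun r : ℝ => Real.Gamma (2 - r)) (deriv Real.Gamma (2 - ρ) * (-1)) ρ :=
    hd.comp ρ ((hasDerivAt_id ρ).const_sub 2)
  have hp : HasDerivAt (fun r : ℝ => lam * t ^ r) (lam * (t ^ ρ * Real.log t)) ρ :=
    (Real.hasStrictDerivAt_const_rpow ht0 ρ).hasDerivAt.const_mul lam
  have hq := ((hasDerivAt_id ρ).const_sub 1).div (hp.mul hd2)
    (mul_pos (mul_pos hlam hx) hG).ne'
  refine ⟨_, hq.congr_of_eventuallyEq ?_, ?_⟩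
  · filter_upwards [Iio_mem_nhds hρ1] with r hr
    have hr' : 0 < 1 - r := by linarith [mem_Iio.1 hr]
    have hx' : 0 < t ^ r := Real.rpow_pos_of_pos ht0 r
    have hg := Real.Gamma_add_one hr'.ne'
    rw [show 1 - r + 1 = 2 - r by ring] at hg
    have hg' : 0 < Real.Gamma (1 - r) := Real.Gamma_pos_of_pos hr'
    simp only [Pi.div_apply, Pi.mul_apply, id]
    rw [hg]
    field_simp
  · have h1 : deriv Real.Gamma (2 - ρ) ≤ Real.log t * Real.Gamma (2 - ρ) := by
      refine (deriv_Gamma_le (by linarith)).trans ?_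
      gcongr
      · linarith
      · linarith
    have h2 : Real.Gamma (2 - ρ) ≤ 1 := Gamma_le_one (by linarith) (by linarith)
    simp only [Pi.mul_apply, id]
    set G := Real.Gamma (2 - ρ)
    set G' := deriv Real.Gamma (2 - ρ)
    set p := t ^ ρ
    have e : (-1 * (lam * p * G) - (1 - ρ) * (lam * (p * Real.log t) * G + lam * p * (G' * -1))) /
        (lam * p * G) ^ 2 = -((G + (1 - ρ) * (Real.log t * G - G')) / (lam * p * G ^ 2)) := by
      field_simp
      ring
    rw [e, neg_le_neg_iff, div_le_div_iff₀ (by positivity) (by positivity)]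
    have h3 : 0 ≤ (1 - ρ) * (Real.log t * G - G') := mul_nonneg (by linarith) (by linarith)
    have h4 : G ^ 2 ≤ G := by nlinarith
    have h5 : 0 < lam * p := by positivity
    nlinarith

lemma exp_scale {ρ lam t : ℝ} (ht : 0 < t) (u c : ℝ) :
    c / lam ^ 2 * Real.exp (2 * ρ * (u - Real.log t))
      = c / (lam * t ^ ρ) ^ 2 * Real.exp (2 * ρ * u) := by
  have : Real.exp (2 * ρ * u) = (t ^ ρ) ^ 2 * Real.exp (2 * ρ * (u - Real.log t)) := by
    rw [Real.rpow_def_of_pos ht, ← Real.exp_nat_mul, ← Real.exp_add]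
    congr 1
    push_cast
    ring
  rw [this]
  have : 0 < t ^ ρ := Real.rpow_pos_of_pos ht ρ
  field_simp

lemma im_kernel {q : ℂ} {l : ℝ} (hl : 0 < l) (h1 : 0 ≤ q.re) (h2 : 0 ≤ q.im) :
    |(q ^ 2 * (q + 2 * l) / (l * (q + l) ^ 2)).im| ≤ 8 / l ^ 2 * q.im * ‖q‖ := by
  obtain ⟨X, Y⟩ := q
  simp only at h1 h2
  have hr : ‖(⟨X, Y⟩ : ℂ)‖ ^ 2 = X ^ 2 + Y ^ 2 := by
    rw [← Complex.normSq_eq_norm_sq, Complex.normSq_apply]; ring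
  have hXr : X ≤ ‖(⟨X, Y⟩ : ℂ)‖ := Complex.re_le_norm (⟨X, Y⟩ : ℂ)
  have hr0 : 0 ≤ ‖(⟨X, Y⟩ : ℂ)‖ := norm_nonneg _
  set r := ‖(⟨X, Y⟩ : ℂ)‖
  set P := 4 * X * l ^ 3 + (4 * X ^ 2 + 3 * r ^ 2) * l ^ 2 + 4 * X * l * r ^ 2 + r ^ 4 with hP
  set m := X ^ 2 + Y ^ 2 + 2 * X * l + l ^ 2 with hm
  have hmp : 0 < m := by positivity
  have e : ((⟨X, Y⟩ : ℂ) ^ 2 * ((⟨X, Y⟩ : ℂ) + 2 * l) / (l * ((⟨X, Y⟩ : ℂ) + l) ^ 2)).im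
      = Y * P / (l * m ^ 2) := by
    have h3 : (⟨X, Y⟩ : ℂ) ^ 2 * ((⟨X, Y⟩ : ℂ) + 2 * l) / (l * ((⟨X, Y⟩ : ℂ) + l) ^ 2) =
        ((⟨X, Y⟩ : ℂ) ^ 2 * ((⟨X, Y⟩ : ℂ) + 2 * l) * (⟨X + l, -Y⟩ : ℂ) ^ 2) / ((l * m ^ 2 : ℝ) : ℂ) := by
      have hm2 : ((l * m ^ 2 : ℝ) : ℂ) = l * ((⟨X, Y⟩ : ℂ) + l) ^ 2 * (⟨X + l, -Y⟩ : ℂ) ^ 2 := by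
        apply Complex.ext
        · simp [pow_two, hm]; ring
        · simp [pow_two]; ring
      have hne : (⟨X + l, -Y⟩ : ℂ) ^ 2 ≠ 0 := by
        intro h0
        rw [h0, mul_zero] at hm2
        have : l * m ^ 2 = 0 := by exact_mod_cast hm2
        have : 0 < l * m ^ 2 := by positivity
        linarith
      rw [hm2, mul_div_mul_right _ _ hne]
    rw [h3, Complex.div_ofReal_im]
    congr 1
    rw [hP, show r ^ 4 = (r ^ 2) ^ 2 by ring, hr]
    simp [pow_two]
    ring
  rw [e, abs_of_nonneg (by positivity), div_le_iff₀ (by positivity)]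
  have hPle : l * P ≤ 8 * r * m ^ 2 := by
    have hm1 : r ^ 2 + l ^ 2 ≤ m := by rw [hr, hm]; nlinarith [mul_nonneg h1 hl.le]
    have hm2 : (r ^ 2 + l ^ 2) ^ 2 ≤ m ^ 2 := by gcongr
    have hP1 : P ≤ r * (4 * l ^ 3 + 7 * r * l ^ 2 + 4 * l * r ^ 2 + r ^ 3) := by
      have a1 : X * l ^ 3 ≤ r * l ^ 3 := by gcongr
      have a2 : X ^ 2 * l ^ 2 ≤ r ^ 2 * l ^ 2 := by gcongr
      have a3 : X * l * r ^ 2 ≤ r * l * r ^ 2 := by gcongr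
      rw [hP]; nlinarith
    have hP2 : l * (4 * l ^ 3 + 7 * r * l ^ 2 + 4 * l * r ^ 2 + r ^ 3) ≤ 8 * (r ^ 2 + l ^ 2) ^ 2 := by
      nlinarith [sq_nonneg (l ^ 2 - r * l), sq_nonneg (r ^ 2 - r * l), sq_nonneg (l ^ 2 - 2 * r * l), sq_nonneg (l*r), sq_nonneg (l^2), sq_nonneg (r^2)]
    calc l * P ≤ l * (r * (4 * l ^ 3 + 7 * r * l ^ 2 + 4 * l * r ^ 2 + r ^ 3)) := by gcongr
      _ = r * (l * (4 * l ^ 3 + 7 * r * l ^ 2 + 4 * l * r ^ 2 + r ^ 3)) := by ring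
      _ ≤ r * (8 * (r ^ 2 + l ^ 2) ^ 2) := by gcongr
      _ ≤ r * (8 * m ^ 2) := by gcongr
      _ = _ := by ring
  have : 8 / l ^ 2 * Y * r * (l * m ^ 2) = Y * (8 * r * m ^ 2) / l := by field_simp
  rw [this, le_div_iff₀ hl]
  nlinarith [mul_le_mul_of_nonneg_left hPle h2]

end ML

open Set Real

namespace ML
open MeasureTheory Filter Topology

lemma zeta_re (v φ : ℝ) : ((v : ℂ) + φ * Complex.I).re = v := by simp
lemma zeta_im (v φ : ℝ) : ((v : ℂ) + φ * Complex.I).im = φ := by simp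

lemma ptA {ρ lam T : ℝ} (hρ : 0 < ρ) (hρ1 : ρ ≤ 1 / 2) (hlam : 0 < lam) (hT : 0 ≤ T) (u : ℝ) :
    |(Fd ρ lam T π u).im| ≤ Real.exp (-Real.exp u) *
      ((T + (Real.exp (ρ * u) + Real.exp (-(ρ * u))) / ρ) * (8 * (ρ * π)) + 2 * π) *
        (1 / lam ^ 2 * Real.exp (2 * ρ * (u - T))) := by
  have hπ := Real.pi_pos
  unfold Fd
  rw [exp_exp_pi]
  set v := u - T with hv
  set ζ : ℂ := (v : ℂ) + π * Complex.I with hζ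
  have hre : ζ.re = v := zeta_re _ _
  have him : ζ.im = π := zeta_im _ _
  set q := Complex.exp (ρ * ζ) with hq
  have hq1 : q.re = Real.exp (ρ * v) * Real.cos (ρ * π) := by
    rw [hq, Complex.exp_re]; simp [hre, him]
  have hq2 : q.im = Real.exp (ρ * v) * Real.sin (ρ * π) := by
    rw [hq, Complex.exp_im]; simp [hre, him]
  have hq3 : ‖q‖ = Real.exp (ρ * v) := by rw [hq, norm_exp_mul, hre]
  have hc : 0 ≤ Real.cos (ρ * π) := Real.cos_nonneg_of_mem_Icc ⟨by nlinarith, by nlinarith⟩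
  have hs : 0 ≤ Real.sin (ρ * π) := Real.sin_nonneg_of_nonneg_of_le_pi (by positivity) (by nlinarith)
  have hs2 : Real.sin (ρ * π) ≤ ρ * π := Real.sin_le (by positivity)
  have hlow : lam ≤ ‖q + lam‖ := by
    refine le_trans ?_ (Complex.re_le_norm _)
    have : 0 ≤ q.re := by rw [hq1]; positivity
    simp only [Complex.add_re, Complex.ofReal_re]
    linarith
  have hk1 : ‖kd ρ lam ζ‖ ≤ 2 / lam ^ 2 * Real.exp (2 * ρ * v) := by
    have := norm_kd_le (ζ := ζ) (ρ := ρ) hlam hlam hlow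
    rw [hre] at this
    refine this.trans (le_of_eq ?_)
    congr 1
    field_simp
    norm_num
  have e2 : Real.exp (2 * ρ * v) = Real.exp (ρ * v) * Real.exp (ρ * v) := by
    rw [← Real.exp_add]; congr 1; ring
  have hk2 : |(kd ρ lam ζ).im| ≤ 8 / lam ^ 2 * (ρ * π) * Real.exp (2 * ρ * v) := by
    have := im_kernel (q := q) hlam (by rw [hq1]; positivity) (by rw [hq2]; positivity)
    unfold kd
    rw [← hq, Complex.neg_im, abs_neg]
    refine this.trans ?_
    rw [hq3, hq2, e2]
    have : 8 / lam ^ 2 * (Real.exp (ρ * v) * Real.sin (ρ * π)) * Real.exp (ρ * v) =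
      8 / lam ^ 2 * Real.sin (ρ * π) * (Real.exp (ρ * v) * Real.exp (ρ * v)) := by ring
    rw [this]
    gcongr
  have hvb : |v| ≤ T + (Real.exp (ρ * u) + Real.exp (-(ρ * u))) / ρ := by
    have h1 := abs_le_exp hρ u
    have h2 : |v| ≤ |u| + |T| := abs_sub u T
    rw [abs_of_nonneg hT] at h2
    linarith
  have hI : ((Real.exp (-Real.exp u) : ℝ) * (ζ * kd ρ lam ζ)).im
      = Real.exp (-Real.exp u) * (v * (kd ρ lam ζ).im + π * (kd ρ lam ζ).re) := by
    rw [Complex.im_ofReal_mul, Complex.mul_im, hre, him]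
  rw [hI, abs_mul, abs_of_pos (Real.exp_pos _), mul_assoc]
  refine mul_le_mul_of_nonneg_left ?_ (Real.exp_pos _).le
  have hr : |(kd ρ lam ζ).re| ≤ 2 / lam ^ 2 * Real.exp (2 * ρ * v) :=
    (Complex.abs_re_le_norm _).trans hk1
  have hB := (abs_nonneg _).trans hvb
  calc |v * (kd ρ lam ζ).im + π * (kd ρ lam ζ).re|
      ≤ |v| * |(kd ρ lam ζ).im| + π * |(kd ρ lam ζ).re| := by
        refine (abs_add_le _ _).trans ?_
        rw [abs_mul, abs_mul, abs_of_pos hπ]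
    _ ≤ (T + (Real.exp (ρ * u) + Real.exp (-(ρ * u))) / ρ) *
          (8 / lam ^ 2 * (ρ * π) * Real.exp (2 * ρ * v)) +
          π * (2 / lam ^ 2 * Real.exp (2 * ρ * v)) := by gcongr
    _ = _ := by ring

lemma lin_int {f g h : ℝ → ℝ} (hf : Integrable f) (hg : Integrable g) (hh : Integrable h)
    (m c : ℝ) : ∫ u, (m * f u + c * (g u + h u)) = m * (∫ u, f u) + c * ((∫ u, g u) + ∫ u, h u) := by
  have h1 := integral_add (hf.const_mul m) ((hg.add hh).const_mul c)
  have h2 := integral_add hg hh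
  simp only [Pi.add_apply] at h1
  rw [h1, integral_const_mul, integral_const_mul, h2]

lemma caseA {ρ lam t : ℝ} (hρ : 0 < ρ) (hρ1 : ρ ≤ 1 / 2) (hlam : 0 < lam) (ht : 2 ≤ t) :
    |(∫ u : ℝ, Fd ρ lam (Real.log t) π u).im| ≤
      π / (lam * t ^ ρ) ^ 2 * (4 * Real.log t + 15 / ρ) := by
  have hπ := Real.pi_pos
  have ht0 : 0 < t := by linarith
  have hT : 0 ≤ Real.log t := Real.log_nonneg (by linarith)
  have hx : 0 < lam * t ^ ρ := mul_pos hlam (Real.rpow_pos_of_pos ht0 ρ)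
  have hF := (deriv_integral (φ := π) hρ (by linarith) hlam ht0 (by linarith) le_rfl).1
  set T := Real.log t with hTd
  set x := lam * t ^ ρ with hxd
  obtain ⟨i1, j1⟩ := integrable_gexp (y := ρ) (c := 1) hρ one_pos
  obtain ⟨i2, j2⟩ := integrable_gexp (y := 2 * ρ) (c := 1) (by positivity) one_pos
  obtain ⟨i3, j3⟩ := integrable_gexp (y := 3 * ρ) (c := 1) (by positivity) one_pos
  have hg1 : Real.Gamma ρ ≤ 1 / ρ := by
    have := Real.Gamma_add_one hρ.ne'
    have h2 := Gamma_le_one (s := ρ + 1) (by linarith) (by linarith)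
    rw [le_div_iff₀ hρ]; linarith
  have hg2 : Real.Gamma (2 * ρ) ≤ 1 / (2 * ρ) := by
    have := Real.Gamma_add_one (s := 2 * ρ) (by positivity)
    have h2 := Gamma_le_one (s := 2 * ρ + 1) (by linarith) (by linarith)
    rw [le_div_iff₀ (by positivity)]; linarith
  have hg3 : Real.Gamma (3 * ρ) ≤ 2 / (3 * ρ) := by
    have := Real.Gamma_add_one (s := 3 * ρ) (by positivity)
    have h2 := Gamma_le_two (s := 3 * ρ + 1) (by linarith) (by linarith)
    rw [le_div_iff₀ (by positivity)]; linarith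
  have hI := im_integral_le hF
    (((i2.const_mul (8 * ρ * π * T + 2 * π)).add
      ((i3.add i1).const_mul (8 * π))).const_mul (1 / x ^ 2)) (fun u => by
      refine (ptA hρ hρ1 hlam hT u).trans (le_of_eq ?_)
      rw [exp_scale ht0, ← hxd]
      have e3 : Real.exp (3 * ρ * u) = Real.exp (ρ * u) * Real.exp (2 * ρ * u) := by
        rw [← Real.exp_add]; congr 1; ring
      have e1 : Real.exp (ρ * u) = Real.exp (-(ρ * u)) * Real.exp (2 * ρ * u) := by
        rw [← Real.exp_add]; congr 1; ring
      simp only [Pi.add_apply, one_mul]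
      rw [e3]
      have : Real.exp (ρ * u) * Real.exp (-Real.exp u)
        = Real.exp (-(ρ * u)) * Real.exp (2 * ρ * u) * Real.exp (-Real.exp u) := by rw [← e1]
      rw [this]
      field_simp
      ring)
  refine hI.trans ?_
  rw [integral_const_mul]
  simp only [Pi.add_apply]
  have hl := lin_int i2 i3 i1 (8 * ρ * π * T + 2 * π) (8 * π)
  rw [hl, j1, j2, j3]
  simp only [div_one, Real.one_rpow, one_mul]
  have : π / x ^ 2 * (4 * T + 15 / ρ) = 1 / x ^ 2 * (π * (4 * T + 15 / ρ)) := by ring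
  rw [this]
  refine mul_le_mul_of_nonneg_left ?_ (by positivity)
  calc (8 * ρ * π * T + 2 * π) * Real.Gamma (2 * ρ) +
        8 * π * (Real.Gamma (3 * ρ) + Real.Gamma ρ)
      ≤ (8 * ρ * π * T + 2 * π) * (1 / (2 * ρ)) + 8 * π * (2 / (3 * ρ) + 1 / ρ) := by gcongr
    _ = π * (4 * T + (43 / 3) / ρ) := by field_simp; ring
    _ ≤ _ := by gcongr; norm_num

lemma ptB {ρ lam T : ℝ} (hρ : 1 / 2 ≤ ρ) (hρ1 : ρ < 1) (hlam : 0 < lam) (hT : 0 ≤ T) (u : ℝ) :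
    ‖Fd ρ lam T (2 * π / 3) u‖ ≤ Real.exp (-((1 / 2) * Real.exp u)) *
      (T + (Real.exp (1 / 2 * u) + Real.exp (-(1 / 2 * u))) / (1 / 2) + 2 * π / 3) *
        (2.64 / lam ^ 2 * Real.exp (2 * ρ * (u - T))) := by
  have hπ := Real.pi_pos
  unfold Fd
  set v := u - T with hv
  rw [norm_mul, norm_mul, mul_assoc]
  set φ : ℝ := 2 * π / 3 with hφ
  set ζ : ℂ := (v : ℂ) + φ * Complex.I with hζ
  have hre : ζ.re = v := zeta_re _ _
  have him : ζ.im = φ := zeta_im _ _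
  have hlow : 5 / 6 * lam ≤ ‖Complex.exp (ρ * ζ) + lam‖ := by
    refine le_of_sq_le_sq ?_ (norm_nonneg _)
    rw [exp_split, normSq_add, hre, him]
    have hc : -(1 / 2) ≤ Real.cos (ρ * φ) := by
      have h1 : Real.cos φ = -(1 / 2) := by
        rw [hφ, show 2 * π / 3 = π - π / 3 by ring, Real.cos_pi_sub, Real.cos_pi_div_three]
      rw [← h1]
      exact Real.cos_le_cos_of_nonneg_of_le_pi (by positivity) (by linarith)
        (by nlinarith [show 0 < φ by positivity])
    have hr := Real.exp_pos (ρ * v)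
    nlinarith [mul_le_mul_of_nonneg_left hc (mul_pos hr hlam).le,
      sq_nonneg (Real.exp (ρ * v) - lam / 2)]
  have hk1 : ‖kd ρ lam ζ‖ ≤ 2.64 / lam ^ 2 * Real.exp (2 * ρ * v) := by
    have := norm_kd_le (ζ := ζ) (ρ := ρ) hlam (by positivity) hlow
    rw [hre] at this
    refine this.trans (le_of_eq ?_)
    congr 1
    field_simp
    norm_num
  have hz : ‖ζ‖ ≤ T + (Real.exp (1 / 2 * u) + Real.exp (-(1 / 2 * u))) / (1 / 2) + φ := by
    have h1 := abs_le_exp (c := 1 / 2) (by norm_num) u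
    have h2 : |v| ≤ |u| + |T| := abs_sub u T
    rw [abs_of_nonneg hT] at h2
    have h3 := Complex.norm_le_abs_re_add_abs_im ζ
    rw [hre, him, abs_of_nonneg (show 0 ≤ φ by positivity)] at h3
    linarith
  have hE : ‖Complex.exp (Complex.exp (u + φ * Complex.I))‖ ≤ Real.exp (-((1 / 2) * Real.exp u)) :=
    norm_exp_exp_le le_rfl (by linarith)
  have := (norm_nonneg _).trans hz
  gcongr

lemma sqrt_two_pi : (2 : ℝ) ^ (1 / 2 : ℝ) * Real.sqrt π ≤ 2.52 := by
  rw [← Real.sqrt_eq_rpow, ← Real.sqrt_mul (by norm_num)]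
  apply Real.sqrt_le_iff.2
  constructor
  · norm_num
  · nlinarith [Real.pi_lt_d2]

lemma caseB {ρ lam t : ℝ} (hρ : 1 / 2 ≤ ρ) (hρ1 : ρ < 1) (hlam : 0 < lam) (ht : 2 ≤ t) :
    |(∫ u : ℝ, Fd ρ lam (Real.log t) (2 * π / 3) u).im| ≤
      2.64 / (lam * t ^ ρ) ^ 2 * (4 * (Real.log t + 2 * π / 3) + 8 * 2.52) := by
  have hπ := Real.pi_pos
  have ht0 : 0 < t := by linarith
  have hT : 0 ≤ Real.log t := Real.log_nonneg (by linarith)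
  have hx : 0 < lam * t ^ ρ := mul_pos hlam (Real.rpow_pos_of_pos ht0 ρ)
  have hF := (deriv_integral (φ := 2 * π / 3) (by linarith) hρ1 hlam ht0 le_rfl (by linarith)).1
  set T := Real.log t with hTd
  set x := lam * t ^ ρ with hxd
  have hh : (0:ℝ) < 1 / 2 := by norm_num
  obtain ⟨i1, j1⟩ := integrable_gexp (y := 1) (c := 1 / 2) (by norm_num) hh
  obtain ⟨i2, j2⟩ := integrable_gexp (y := 2) (c := 1 / 2) (by norm_num) hh
  obtain ⟨i3, j3⟩ := integrable_gexp (y := 1 / 2) (c := 1 / 2) (by norm_num) hh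
  obtain ⟨i4, j4⟩ := integrable_gexp (y := 3 / 2) (c := 1 / 2) (by norm_num) hh
  obtain ⟨i5, j5⟩ := integrable_gexp (y := 5 / 2) (c := 1 / 2) (by norm_num) hh
  have g2 : (1 / (1 / 2) : ℝ) = 2 := by norm_num
  rw [g2] at j1 j2 j3 j4 j5
  have hK := sqrt_two_pi
  set K := (2 : ℝ) ^ (1 / 2 : ℝ) * Real.sqrt π with hKd
  have r1 : (2:ℝ) ^ (1:ℝ) * Real.Gamma 1 = 2 := by simp
  have r2 : (2:ℝ) ^ (2:ℝ) * Real.Gamma 2 = 4 := by rw [Real.Gamma_two]; norm_num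
  have r3 : (2:ℝ) ^ (1 / 2:ℝ) * Real.Gamma (1 / 2) = K := by rw [Real.Gamma_one_half_eq]
  have r4 : (2:ℝ) ^ (3 / 2:ℝ) * Real.Gamma (3 / 2) = K := by
    rw [← r3, show (3 / 2 : ℝ) = 1 / 2 + 1 by norm_num, Real.Gamma_add_one (by norm_num),
      Real.rpow_add (by norm_num), Real.rpow_one]
    ring
  have r5 : (2:ℝ) ^ (5 / 2:ℝ) * Real.Gamma (5 / 2) = 3 * K := by
    rw [← r4, show (5 / 2 : ℝ) = 3 / 2 + 1 by norm_num, Real.Gamma_add_one (by norm_num),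
      Real.rpow_add (by norm_num), Real.rpow_one]
    ring
  rw [r1] at j1
  rw [r2] at j2
  rw [r3] at j3
  rw [r4] at j4
  rw [r5] at j5
  set a := 2 - 2 * ρ with ha
  set b := 2 * ρ - 1 with hb
  have ha0 : 0 ≤ a := by linarith
  have hb0 : 0 ≤ b := by linarith
  have hab : a + b = 1 := by rw [ha, hb]; ring
  set M := T + 2 * π / 3 with hM
  have hM0 : 0 ≤ M := by positivity
  have ia := ((i1.const_mul M).add ((i4.add i3).const_mul 2)).const_mul a
  have ib := ((i2.const_mul M).add ((i5.add i4).const_mul 2)).const_mul b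
  have hI := im_integral_le hF ((ia.add ib).const_mul (2.64 / x ^ 2)) (fun u => by
      refine (Complex.abs_im_le_norm _).trans ((ptB hρ hρ1 hlam hT u).trans ?_)
      rw [exp_scale ht0, ← hxd]
      have hconv : Real.exp (2 * ρ * u) ≤ a * Real.exp (1 * u) + b * Real.exp (2 * u) := by
        have := convexOn_exp.2 (mem_univ (1 * u)) (mem_univ (2 * u)) ha0 hb0 hab
        simp only [smul_eq_mul] at this
        rwa [show a * (1 * u) + b * (2 * u) = 2 * ρ * u by rw [ha, hb]; ring] at this
      set z := Real.exp (1 / 2 * u) with hz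
      set w := Real.exp (-(1 / 2 * u)) with hw
      have hzw : z * w = 1 := by rw [hz, hw, ← Real.exp_add]; simp
      have hz0 : 0 < z := Real.exp_pos _
      have hw0 : 0 < w := Real.exp_pos _
      have e1 : Real.exp (1 * u) = z ^ 2 := by rw [hz, ← Real.exp_nat_mul]; congr 1; push_cast; ring
      have e2 : Real.exp (2 * u) = z ^ 4 := by rw [hz, ← Real.exp_nat_mul]; congr 1; push_cast; ring
      have e4 : Real.exp (3 / 2 * u) = z ^ 3 := by
        rw [hz, ← Real.exp_nat_mul]; congr 1; push_cast; ring
      have e5 : Real.exp (5 / 2 * u) = z ^ 5 := by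
        rw [hz, ← Real.exp_nat_mul]; congr 1; push_cast; ring
      simp only [Pi.add_apply]
      rw [e1, e2, e4, e5]
      rw [e1, e2] at hconv
      set E := Real.exp (-(1 / 2 * Real.exp u)) with hE
      have hE0 : 0 < E := Real.exp_pos _
      calc E * (T + (z + w) / (1 / 2) + 2 * π / 3) * (2.64 / x ^ 2 * Real.exp (2 * ρ * u))
          ≤ E * (T + (z + w) / (1 / 2) + 2 * π / 3) * (2.64 / x ^ 2 * (a * z ^ 2 + b * z ^ 4)) := by
            gcongr
        _ = 2.64 / x ^ 2 * (E * ((M + 2 * (z + w)) * (a * z ^ 2 + b * z ^ 4))) := by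
            rw [hM]; ring
        _ = _ := by
            congr 1
            have h1 : w * z ^ 2 = z := by
              calc w * z ^ 2 = (z * w) * z := by ring
                _ = z := by rw [hzw, one_mul]
            have h2 : w * z ^ 4 = z ^ 3 := by
              calc w * z ^ 4 = (z * w) * z ^ 3 := by ring
                _ = z ^ 3 := by rw [hzw, one_mul]
            linear_combination (2 * E * a) * h1 + (2 * E * b) * h2)
  refine hI.trans ?_
  rw [integral_const_mul]
  refine mul_le_mul_of_nonneg_left ?_ (by positivity)
  have ea : ∫ u : ℝ, a * (M * (Real.exp (1 * u) * Real.exp (-(1 / 2 * Real.exp u)))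
      + 2 * ((Real.exp (3 / 2 * u) * Real.exp (-(1 / 2 * Real.exp u))) +
        (Real.exp (1 / 2 * u) * Real.exp (-(1 / 2 * Real.exp u))))) = a * (M * 2 + 2 * (K + K)) := by
    have hl := lin_int i1 i4 i3 M 2
    rw [integral_const_mul, hl, j1, j3, j4]
  have eb : ∫ u : ℝ, b * (M * (Real.exp (2 * u) * Real.exp (-(1 / 2 * Real.exp u)))
      + 2 * ((Real.exp (5 / 2 * u) * Real.exp (-(1 / 2 * Real.exp u))) +
        (Real.exp (3 / 2 * u) * Real.exp (-(1 / 2 * Real.exp u))))) =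
        b * (M * 4 + 2 * (3 * K + K)) := by
    have hl := lin_int i2 i5 i4 M 2
    rw [integral_const_mul, hl, j2, j4, j5]
  have es := integral_add ia ib
  simp only [Pi.add_apply] at es ea eb ⊢
  rw [es, ea, eb]
  have hK0 : 0 ≤ K := by positivity
  have : a = 1 - b := by linarith
  rw [this]
  have hb1 : b ≤ 1 := by linarith
  nlinarith [mul_nonneg hM0 (sub_nonneg.2 hb1), mul_nonneg hK0 (sub_nonneg.2 hb1)]

lemma hasDeriv {ρ lam t : ℝ} (hρ : 0 < ρ) (hρ1 : ρ < 1) (hlam : 0 < lam) (ht : 2 ≤ t)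
    (hx : 43 / ρ + 4.6 * Real.log t < lam * t ^ ρ) :
    ∃ D < 0, HasDerivAt (fun ρ : ℝ => mittagLeffler ρ (-(lam * t ^ ρ))) D ρ := by
  have hπ := Real.pi_pos
  have hπ3 := Real.pi_gt_three
  have ht0 : 0 < t := by linarith
  have hT : 0 ≤ Real.log t := Real.log_nonneg (by linarith)
  have hx0 : 0 < lam * t ^ ρ := mul_pos hlam (Real.rpow_pos_of_pos ht0 ρ)
  obtain ⟨A, hA, hA'⟩ := main_term hρ hρ1 hlam ht
  have key : ∃ φ, 2 * π / 3 ≤ φ ∧ φ ≤ π ∧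
      |(∫ u : ℝ, Fd ρ lam (Real.log t) φ u).im| < π * (1 / (lam * t ^ ρ)) := by
    rcases le_total ρ (1 / 2) with h | h
    · refine ⟨π, by linarith, le_rfl, (caseA hρ h hlam ht).trans_lt ?_⟩
      set x := lam * t ^ ρ
      have e : π * (1 / x) = π / x ^ 2 * x := by field_simp
      rw [e]
      refine mul_lt_mul_of_pos_left ?_ (by positivity)
      have : 15 / ρ ≤ 43 / ρ := by gcongr; norm_num
      linarith
    · refine ⟨2 * π / 3, le_rfl, by linarith, (caseB h hρ1 hlam ht).trans_lt ?_⟩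
      set x := lam * t ^ ρ
      have e : π * (1 / x) = 1 / x ^ 2 * (π * x) := by field_simp
      have e2 : 2.64 / x ^ 2 * (4 * (Real.log t + 2 * π / 3) + 8 * 2.52) =
        1 / x ^ 2 * (2.64 * (4 * (Real.log t + 2 * π / 3) + 8 * 2.52)) := by ring
      rw [e, e2]
      refine mul_lt_mul_of_pos_left ?_ (by positivity)
      have h43 : 43 ≤ 43 / ρ := by rw [le_div_iff₀ hρ]; linarith
      have hx2 : 43 + 4.6 * Real.log t < x := by linarith
      have := Real.pi_lt_d2
      nlinarith
  obtain ⟨φ, h1, h2, hb⟩ := key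
  have hd := (deriv_integral hρ hρ1 hlam ht0 h1 h2).2
  have hd2 : HasDerivAt (fun ρ : ℝ => (∫ u : ℝ, hk (k2 ρ (lam * t ^ ρ)) (u + φ * Complex.I)).im)
      (∫ u : ℝ, Fd ρ lam (Real.log t) φ u).im ρ :=
    Complex.imCLM.hasFDerivAt.comp_hasDerivAt ρ hd
  refine ⟨_, ?_, (hA.add (hd2.const_mul (1 / π))).congr_of_eventuallyEq ?_⟩
  · have h3 := (abs_lt.1 hb).2
    have : 1 / π * (∫ u : ℝ, Fd ρ lam (Real.log t) φ u).im < 1 / (lam * t ^ ρ) := by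
      rw [one_div_mul_eq_div, div_lt_iff₀ hπ]; linarith
    linarith
  · filter_upwards [Ioo_mem_nhds hρ hρ1] with r hr
    exact repr hr.1 hr.2 (mul_pos hlam (Real.rpow_pos_of_pos ht0 r)) h1 h2

end ML

/-- With `B₁ = 43`, `B₂ = 4.6`: if `t₀ ≥ 2` and `t₀^{ρ₀} > (B₁/ρ₀ + B₂ ln t₀)/λ₀`, then for
every `λ ≥ λ₀` and `ρ ∈ [ρ₀, 1)` the derivative in `ρ` of `ρ ↦ E_ρ(−λ t₀^ρ)` is negative;
consequently this function is strictly decreasing on `[ρ₀, 1)`. -/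
theorem stmt6 (ρ₀ lam₀ t₀ : ℝ) (hρ₀ : 0 < ρ₀) (hρ₀' : ρ₀ < 1) (hlam₀ : 0 < lam₀)
    (ht₀ : 2 ≤ t₀) (ht₀' : (43 / ρ₀ + 4.6 * Real.log t₀) / lam₀ < t₀ ^ ρ₀) :
    ∀ lam : ℝ, lam₀ ≤ lam →
      (∀ ρ ∈ Set.Ico ρ₀ 1,
        deriv (fun ρ : ℝ => mittagLeffler ρ (-(lam * t₀ ^ ρ))) ρ < 0) ∧
      StrictAntiOn (fun ρ : ℝ => mittagLeffler ρ (-(lam * t₀ ^ ρ))) (Set.Ico ρ₀ 1) := by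
  intro lam hlam
  have hl : 0 < lam := by linarith
  have key : ∀ ρ ∈ Set.Ico ρ₀ 1,
      ∃ D < 0, HasDerivAt (fun ρ : ℝ => mittagLeffler ρ (-(lam * t₀ ^ ρ))) D ρ := by
    intro ρ hρ
    have hρ0 : 0 < ρ := by linarith [hρ.1]
    refine ML.hasDeriv hρ0 hρ.2 hl ht₀ ?_
    rw [div_lt_iff₀ hlam₀] at ht₀'
    have h1 : 43 / ρ ≤ 43 / ρ₀ := by
      have := hρ.1
      gcongr
    have h2 : t₀ ^ ρ₀ ≤ t₀ ^ ρ := Real.rpow_le_rpow_of_exponent_le (by linarith) hρ.1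
    have h3 : t₀ ^ ρ₀ * lam₀ ≤ t₀ ^ ρ * lam := by
      have : 0 < t₀ ^ ρ₀ := Real.rpow_pos_of_pos (by linarith) _
      gcongr
    linarith
  have hneg : ∀ ρ ∈ Set.Ico ρ₀ 1,
      deriv (fun ρ : ℝ => mittagLeffler ρ (-(lam * t₀ ^ ρ))) ρ < 0 := by
    intro ρ hρ
    obtain ⟨D, hD, h⟩ := key ρ hρ
    rw [h.deriv]; exact hD
  refine ⟨hneg, strictAntiOn_of_deriv_neg (convex_Ico _ _) ?_ ?_⟩
  · intro ρ hρ
    obtain ⟨D, hD, h⟩ := key ρ hρ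
    exact h.continuousAt.continuousWithinAt
  · intro ρ hρ
    exact hneg ρ (interior_subset hρ)
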